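/- arXiv:2407.13746 — 18 statements merged into one kernel-verified Lean document; each statement's English description precedes it below -/
import Mathlib

section
/- Let V ⊆ ℝ be a nonempty set (the achievable score values), Φ : ℝ → ℝ a nonnegative function, and Γ : ℝ → ℝ a function that is concave on [0, ∞). Assume the pointwise binary consistency bound: for every α ∈ [0,1] and every u ∈ V, (α·1{u<0} + (1−α)·1{u≥0}) − inf_{u'∈V} (α·1{u'<0} + (1−α)·1{u'≥0}) ≤ Γ( (α·Φ(u) + (1−α)·Φ(−u)) − inf_{u'∈V} (α·Φ(u') + (1−α)·Φ(−u')) ). Then for every conditional label distribution p on Y = {−1,+1}^l and every v ∈ V^l, the conditional Hamming regret satisfies E_ham(v) − inf_{w∈V^l} E_ham(w) ≤ l·Γ( (E_br(v) − inf_{w∈V^l} E_br(w)) / l ), where E_ham(v) = ∑_{y∈Y} p(y) ∑_{i=1}^{l} 1{y_i ≠ sgn(v_i)} with sgn(t) = +1 if t ≥ 0 and −1 otherwise, and E_br(v) = ∑_{y∈Y} p(y) ∑_{i=1}^{l} Φ(y_i·v_i). -/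
noncomputable section
open Real

/-- Sign: `+1` if `t ≥ 0`, `−1` otherwise. -/
def sgn (t : ℝ) : ℝ := if 0 ≤ t then 1 else -1

/-- Real value (`±1`) of a Boolean label coordinate. -/
def signVal (b : Bool) : ℝ := if b then 1 else -1

/-- Conditional binary zero-one error of score `u` when the label `+1` has probability `α`. -/
def berr (α u : ℝ) : ℝ :=
  α * (if u < 0 then (1 : ℝ) else 0) + (1 - α) * (if 0 ≤ u then (1 : ℝ) else 0)

/-- Conditional binary surrogate error of score `u` for the margin loss `Φ`. -/
def bsur (Φ : ℝ → ℝ) (α u : ℝ) : ℝ := α * Φ u + (1 - α) * Φ (-u)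

/-- Conditional Hamming error of the score vector `v`. -/
def Eham {l : ℕ} (p : (Fin l → Bool) → ℝ) (v : Fin l → ℝ) : ℝ :=
  ∑ y, p y * ∑ i, (if signVal (y i) = sgn (v i) then (0 : ℝ) else 1)

/-- Conditional binary-relevance surrogate error of the score vector `v`. -/
def Ebr {l : ℕ} (Φ : ℝ → ℝ) (p : (Fin l → Bool) → ℝ) (v : Fin l → ℝ) : ℝ :=
  ∑ y, p y * ∑ i, Φ (signVal (y i) * v i)

theorem aux_sInf_sum {l : ℕ} (V : Set ℝ) (hV : V.Nonempty) (f : Fin l → ℝ → ℝ)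
    (hf : ∀ i u, 0 ≤ f i u) :
    sInf ((fun w : Fin l → ℝ => ∑ i, f i (w i)) '' {w : Fin l → ℝ | ∀ i, w i ∈ V})
      = ∑ i, sInf (f i '' V) := by
  have hb : ∀ i, BddBelow (f i '' V) := fun i => ⟨0, by rintro _ ⟨u, _, rfl⟩; exact hf i u⟩
  obtain ⟨u0, hu0⟩ := hV
  apply le_antisymm
  · apply le_of_forall_pos_le_add
    intro ε hε
    have hδ : 0 < ε / (l + 1) := by positivity
    have hex : ∀ i, ∃ u ∈ V, f i u < sInf (f i '' V) + ε / (l + 1) := by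
      intro i
      obtain ⟨_, ⟨u, hu, rfl⟩, h⟩ := Real.lt_sInf_add_pos (s := f i '' V) ⟨_, u0, hu0, rfl⟩ hδ
      exact ⟨u, hu, h⟩
    choose w hw hlt using hex
    have h1 : sInf ((fun w : Fin l → ℝ => ∑ i, f i (w i)) '' {w : Fin l → ℝ | ∀ i, w i ∈ V})
        ≤ ∑ i, f i (w i) := by
      apply csInf_le
      · refine ⟨0, ?_⟩
        rintro _ ⟨w, _, rfl⟩
        exact Finset.sum_nonneg fun i _ => hf i _
      · exact ⟨w, hw, rfl⟩
    have h2 : ∑ i, f i (w i) ≤ ∑ i, (sInf (f i '' V) + ε / (l + 1)) :=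
      Finset.sum_le_sum fun i _ => (hlt i).le
    rw [Finset.sum_add_distrib] at h2
    simp only [Finset.sum_const, Finset.card_univ, Fintype.card_fin, nsmul_eq_mul] at h2
    have h3 : (l : ℝ) * (ε / (l + 1)) ≤ ε := by
      have : ((l : ℝ) + 1) * (ε / (l + 1)) = ε := by field_simp
      nlinarith
    linarith
  · apply le_csInf
    · exact ⟨_, fun _ => u0, fun _ => hu0, rfl⟩
    · rintro _ ⟨w, hw, rfl⟩
      exact Finset.sum_le_sum fun i _ => csInf_le (hb i) ⟨_, hw i, rfl⟩

/-- Marginal probability of label `+1` at coordinate `i`. -/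
def auxMarg {l : ℕ} (p : (Fin l → Bool) → ℝ) (i : Fin l) : ℝ :=
  ∑ y, p y * (if y i then (1 : ℝ) else 0)

theorem aux_split {l : ℕ} (p : (Fin l → Bool) → ℝ) (hp1 : ∑ y, p y = 1) (i : Fin l)
    (g : Bool → ℝ) :
    ∑ y, p y * g (y i) = auxMarg p i * g true + (1 - auxMarg p i) * g false := by
  rw [← hp1, auxMarg, ← Finset.sum_sub_distrib, Finset.sum_mul, Finset.sum_mul,
    ← Finset.sum_add_distrib]
  refine Finset.sum_congr rfl fun y _ => ?_
  cases y i <;> simp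

theorem aux_Eham {l : ℕ} (p : (Fin l → Bool) → ℝ) (hp1 : ∑ y, p y = 1) :
    Eham p = fun w : Fin l → ℝ => ∑ i, berr (auxMarg p i) (w i) := by
  funext w
  simp only [Eham, Finset.mul_sum]
  rw [Finset.sum_comm]
  refine Finset.sum_congr rfl fun i _ => ?_
  rw [aux_split p hp1 i (fun b => if signVal b = sgn (w i) then (0 : ℝ) else 1)]
  rcases lt_or_ge (w i) 0 with h | h
  · have h' := not_le.mpr h
    norm_num [berr, signVal, sgn, h, h']
  · have h' := not_lt.mpr h
    norm_num [berr, signVal, sgn, h, h']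

theorem aux_Ebr {l : ℕ} (Φ : ℝ → ℝ) (p : (Fin l → Bool) → ℝ) (hp1 : ∑ y, p y = 1) :
    Ebr Φ p = fun w : Fin l → ℝ => ∑ i, bsur Φ (auxMarg p i) (w i) := by
  funext w
  simp only [Ebr, Finset.mul_sum]
  rw [Finset.sum_comm]
  refine Finset.sum_congr rfl fun i _ => ?_
  rw [aux_split p hp1 i (fun b => Φ (signVal b * w i))]
  simp [bsur, signVal]

theorem binary_relevance_Hconsistency_bound
    (V : Set ℝ) (hV : V.Nonempty)
    (Φ : ℝ → ℝ) (hΦ : ∀ u, 0 ≤ Φ u)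
    (Γ : ℝ → ℝ) (hΓ : ConcaveOn ℝ (Set.Ici 0) Γ)
    (hbin : ∀ α ∈ Set.Icc (0 : ℝ) 1, ∀ u ∈ V,
      berr α u - sInf (berr α '' V) ≤ Γ (bsur Φ α u - sInf (bsur Φ α '' V)))
    (l : ℕ) (hl : 1 ≤ l)
    (p : (Fin l → Bool) → ℝ) (hp0 : ∀ y, 0 ≤ p y) (hp1 : ∑ y, p y = 1)
    (v : Fin l → ℝ) (hv : ∀ i, v i ∈ V) :
    Eham p v - sInf (Eham p '' {w : Fin l → ℝ | ∀ i, w i ∈ V})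
      ≤ l * Γ ((Ebr Φ p v - sInf (Ebr Φ p '' {w : Fin l → ℝ | ∀ i, w i ∈ V})) / l) := by
  have hα : ∀ i, auxMarg p i ∈ Set.Icc (0 : ℝ) 1 := by
    intro i
    constructor
    · exact Finset.sum_nonneg fun y _ => mul_nonneg (hp0 y) (by split_ifs <;> norm_num)
    · rw [← hp1]
      refine Finset.sum_le_sum fun y _ => ?_
      have := hp0 y
      split_ifs <;> simp [this]
  have hs0 : ∀ i u, 0 ≤ bsur Φ (auxMarg p i) u := fun i u =>
    add_nonneg (mul_nonneg (hα i).1 (hΦ _)) (mul_nonneg (sub_nonneg.mpr (hα i).2) (hΦ _))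
  have he0 : ∀ i u, 0 ≤ berr (auxMarg p i) u := fun i u =>
    add_nonneg (mul_nonneg (hα i).1 (by split_ifs <;> norm_num))
      (mul_nonneg (sub_nonneg.mpr (hα i).2) (by split_ifs <;> norm_num))
  rw [aux_Eham p hp1, aux_Ebr Φ p hp1,
    aux_sInf_sum V hV (fun i => berr (auxMarg p i)) he0,
    aux_sInf_sum V hV (fun i => bsur Φ (auxMarg p i)) hs0]
  simp only [← Finset.sum_sub_distrib]
  have hl0 : (0 : ℝ) < l := by exact_mod_cast hl
  have hJ := hΓ.le_map_sum (t := Finset.univ) (w := fun _ : Fin l => (1 / l : ℝ))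
    (p := fun i => bsur Φ (auxMarg p i) (v i) - sInf (bsur Φ (auxMarg p i) '' V))
    (fun _ _ => by positivity) (by simp [hl0.ne'])
    (fun i _ => by
      have h : sInf (bsur Φ (auxMarg p i) '' V) ≤ bsur Φ (auxMarg p i) (v i) := by
        refine csInf_le ⟨0, ?_⟩ ⟨_, hv i, rfl⟩
        rintro _ ⟨u, _, rfl⟩
        exact hs0 i u
      exact sub_nonneg.mpr h)
  simp only [smul_eq_mul, ← Finset.mul_sum] at hJ
  rw [one_div, inv_mul_le_iff₀ hl0, inv_mul_eq_div] at hJ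
  exact (Finset.sum_le_sum fun i _ => hbin _ (hα i) _ (hv i)).trans hJ
end
end

section
/- For every α ∈ [0,1] and every u ∈ ℝ, the conditional binary zero-one regret of the prediction sgn(u) under the logistic loss satisfies (α·1{u<0} + (1−α)·1{u≥0}) − min(α, 1−α) ≤ √2 · √( α·log(1+e^{−u}) + (1−α)·log(1+e^{u}) − H(α) ), where H(α) = −α·log α − (1−α)·log(1−α) (with the convention 0·log 0 = 0), and H(α) = inf_{u'∈ℝ} ( α·log(1+e^{−u'}) + (1−α)·log(1+e^{u'}) ). -/
noncomputable section
open Real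

lemma gibbs_aux (a q : ℝ) (ha : 0 ≤ a) (hq : 0 < q) :
    -(a * Real.log a) ≤ a * Real.log q + q⁻¹ - a := by
  rcases ha.eq_or_lt with h | h
  · subst h
    have := inv_pos.mpr hq
    simp; linarith
  · have hx : 0 < (a * q)⁻¹ := by positivity
    have h1 := Real.log_le_sub_one_of_pos hx
    rw [Real.log_inv, Real.log_mul h.ne' hq.ne'] at h1
    have h2 := mul_le_mul_of_nonneg_left h1 h.le
    have h3 : a * ((a * q)⁻¹ - 1) = q⁻¹ - a := by field_simp
    nlinarith

lemma gibbs_s1 (a v : ℝ) (h0 : 0 ≤ a) (h1 : a ≤ 1) :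
    (-(a * Real.log a) - (1 - a) * Real.log (1 - a)) ≤
      a * Real.log (1 + Real.exp (-v)) + (1 - a) * Real.log (1 + Real.exp v) := by
  have e1 := gibbs_aux a (1 + Real.exp (-v)) h0 (by positivity)
  have e2 := gibbs_aux (1 - a) (1 + Real.exp v) (by linarith) (by positivity)
  have e3 : (1 + Real.exp (-v))⁻¹ + (1 + Real.exp v)⁻¹ = 1 := by
    have := Real.exp_pos v
    rw [Real.exp_neg]
    field_simp
    ring
  linarith

lemma log_one_add_exp (v : ℝ) :
    Real.log (1 + Real.exp v) = Real.log 2 + v / 2 + Real.log (Real.cosh (v / 2)) := by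
  have h : 1 + Real.exp v = 2 * Real.exp (v / 2) * Real.cosh (v / 2) := by
    rw [Real.cosh_eq]
    have e1 : Real.exp v = Real.exp (v / 2) * Real.exp (v / 2) := by
      rw [← Real.exp_add]; ring_nf
    have e2 : Real.exp (v / 2) * Real.exp (-(v / 2)) = 1 := by
      rw [← Real.exp_add]; simp
    rw [e1]; linear_combination -e2
  rw [h, Real.log_mul (by positivity) (Real.cosh_pos _).ne',
    Real.log_mul (by positivity) (by positivity), Real.log_exp]

lemma log_cosh_le (v : ℝ) : Real.log (Real.cosh (v / 2)) ≤ v ^ 2 / 8 := by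
  have := Real.log_le_log (Real.cosh_pos _) (Real.cosh_le_exp_half_sq (v / 2))
  rw [Real.log_exp] at this
  linarith

lemma risk_eq (a u : ℝ) :
    a * Real.log (1 + Real.exp (-u)) + (1 - a) * Real.log (1 + Real.exp u)
      = Real.log 2 + (1 / 2 - a) * u + Real.log (Real.cosh (u / 2)) := by
  rw [log_one_add_exp u, log_one_add_exp (-u), neg_div, Real.cosh_neg]
  ring

lemma entropy_le (a : ℝ) (h0 : 0 ≤ a) (h1 : a ≤ 1) :
    (-(a * Real.log a) - (1 - a) * Real.log (1 - a)) ≤ Real.log 2 - (1 - 2 * a) ^ 2 / 2 := by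
  have h := gibbs_s1 a (4 * (a - 1 / 2)) h0 h1
  rw [risk_eq] at h
  have := log_cosh_le (4 * (a - 1 / 2))
  nlinarith

lemma regret_le (a u : ℝ) (h0 : 0 ≤ a) (h1 : a ≤ 1) (h : 0 ≤ (1 / 2 - a) * u) :
    |1 - 2 * a| ≤ Real.sqrt 2 *
        Real.sqrt (a * Real.log (1 + Real.exp (-u)) + (1 - a) * Real.log (1 + Real.exp u)
          - (-(a * Real.log a) - (1 - a) * Real.log (1 - a))) := by
  rw [← Real.sqrt_mul (by norm_num)]
  apply Real.abs_le_sqrt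
  rw [risk_eq]
  have := entropy_le a h0 h1
  have := Real.log_nonneg (Real.one_le_cosh (u / 2))
  linarith

lemma small_exp (w : ℝ) (hw : 0 < w) : ∃ u : ℝ, Real.log (1 + Real.exp u) < w := by
  refine ⟨Real.log (w / 2), ?_⟩
  rw [Real.exp_log (by positivity)]
  have := Real.log_le_sub_one_of_pos (show 0 < 1 + w / 2 by positivity)
  linarith

theorem logistic_binary_Hconsistency_bound
    (α : ℝ) (hα : α ∈ Set.Icc (0 : ℝ) 1) (u : ℝ) :
    (α * (if u < 0 then (1 : ℝ) else 0) + (1 - α) * (if 0 ≤ u then (1 : ℝ) else 0))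
        - min α (1 - α)
      ≤ Real.sqrt 2 *
        Real.sqrt (α * Real.log (1 + Real.exp (-u)) + (1 - α) * Real.log (1 + Real.exp u)
          - (-(α * Real.log α) - (1 - α) * Real.log (1 - α)))
    ∧ (-(α * Real.log α) - (1 - α) * Real.log (1 - α))
        = ⨅ u' : ℝ, (α * Real.log (1 + Real.exp (-u')) + (1 - α) * Real.log (1 + Real.exp u')) := by
  obtain ⟨h0, h1⟩ := hα
  constructor
  · rcases lt_or_ge u 0 with hu | hu
    · rw [if_pos hu, if_neg (not_le.mpr hu)]
      rcases le_total α (1 - α) with h | h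
      · rw [min_eq_left h]
        have : α * 1 + (1 - α) * 0 - α = 0 := by ring
        rw [this]; positivity
      · rw [min_eq_right h]
        refine le_trans ?_ (regret_le α u h0 h1
          (mul_nonneg_of_nonpos_of_nonpos (by linarith) hu.le))
        have := neg_abs_le (1 - 2 * α)
        linarith
    · rw [if_neg (not_lt.mpr hu), if_pos hu]
      rcases le_total α (1 - α) with h | h
      · rw [min_eq_left h]
        refine le_trans ?_ (regret_le α u h0 h1 (mul_nonneg (by linarith) hu))
        have := le_abs_self (1 - 2 * α)
        linarith
      · rw [min_eq_right h]
        have : α * 0 + (1 - α) * 1 - (1 - α) = 0 := by ring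
        rw [this]; positivity
  · symm
    apply ciInf_eq_of_forall_ge_of_forall_gt_exists_lt
    · exact fun v => gibbs_s1 α v h0 h1
    · intro w hw
      rcases h0.eq_or_lt with h | h0'
      · subst h
        simp at hw
        obtain ⟨v, hv⟩ := small_exp w hw
        exact ⟨v, by simpa using hv⟩
      rcases h1.eq_or_lt with h | h1'
      · subst h
        simp at hw
        obtain ⟨v, hv⟩ := small_exp w hw
        exact ⟨-v, by simpa using hv⟩
      have hb : 0 < 1 - α := by linarith
      refine ⟨Real.log (α / (1 - α)), lt_of_eq_of_lt ?_ hw⟩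
      rw [Real.exp_neg, Real.exp_log (by positivity)]
      have e1 : 1 + (α / (1 - α))⁻¹ = α⁻¹ := by field_simp; ring
      have e2 : 1 + α / (1 - α) = (1 - α)⁻¹ := by field_simp; ring
      rw [e1, e2, Real.log_inv, Real.log_inv]
      ring
end
end

section
/- For every conditional label distribution p on Y = {−1,+1}^l and every v ∈ ℝ^l, E_ham(v) − inf_{w∈ℝ^l} E_ham(w) ≤ √( 2·l·( E_br(v) − inf_{w∈ℝ^l} E_br(w) ) ), where E_ham(v) = ∑_{y∈Y} p(y) ∑_{i=1}^{l} 1{y_i ≠ sgn(v_i)} with sgn(t) = +1 if t ≥ 0 and −1 otherwise, and E_br(v) = ∑_{y∈Y} p(y) ∑_{i=1}^{l} log(1 + e^{−y_i·v_i}) is the binary relevance logistic surrogate conditional error. -/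
noncomputable section
open Real

/-- Conditional binary-relevance logistic surrogate error of the score vector `v`. -/
def EbrLog {l : ℕ} (p : (Fin l → Bool) → ℝ) (v : Fin l → ℝ) : ℝ :=
  ∑ y, p y * ∑ i, Real.log (1 + Real.exp (-(signVal (y i) * v i)))

theorem sgn_sq (t : ℝ) : sgn t = 1 ∨ sgn t = -1 := by
  unfold sgn; split_ifs <;> simp

theorem signVal_cases (b : Bool) : signVal b = 1 ∨ signVal b = -1 := by
  unfold signVal; split_ifs <;> simp

/-- Conditional mean of the `i`-th label. -/
def dmean {l : ℕ} (p : (Fin l → Bool) → ℝ) (i : Fin l) : ℝ := ∑ y, p y * signVal (y i)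

theorem sum_affine {l : ℕ} (p : (Fin l → Bool) → ℝ) (hp1 : ∑ y, p y = 1)
    (a b : Fin l → ℝ) :
    ∑ y, p y * ∑ i, (a i - signVal (y i) * b i) = ∑ i, (a i - dmean p i * b i) := by
  simp_rw [Finset.mul_sum]
  rw [Finset.sum_comm]
  refine Finset.sum_congr rfl fun i _ => ?_
  simp_rw [mul_sub, Finset.sum_sub_distrib, ← mul_assoc, ← Finset.sum_mul]
  rw [hp1, one_mul, dmean]

theorem Eham_eq {l : ℕ} (p : (Fin l → Bool) → ℝ) (hp1 : ∑ y, p y = 1) (v : Fin l → ℝ) :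
    Eham p v = ∑ i, (1 / 2 - dmean p i * (sgn (v i) / 2)) := by
  rw [← sum_affine p hp1 (fun _ => 1 / 2) (fun i => sgn (v i) / 2), Eham]
  refine Finset.sum_congr rfl fun y _ => ?_
  congr 1
  refine Finset.sum_congr rfl fun i _ => ?_
  rcases sgn_sq (v i) with h | h <;> rcases signVal_cases (y i) with h' | h' <;>
    rw [h, h'] <;> norm_num

theorem log_two_cosh (x : ℝ) : Real.log (1 + Real.exp (-x)) =
    Real.log (2 * Real.cosh (x / 2)) - x / 2 := by
  have h : 1 + Real.exp (-x) = 2 * Real.cosh (x / 2) * Real.exp (-(x / 2)) := by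
    rw [Real.cosh_eq]
    have e1 : Real.exp (x / 2) * Real.exp (-(x / 2)) = 1 := by
      rw [← Real.exp_add]; simp
    have e2 : Real.exp (-(x / 2)) * Real.exp (-(x / 2)) = Real.exp (-x) := by
      rw [← Real.exp_add]; congr 1; ring
    linear_combination -e1 - e2
  have hc := Real.cosh_pos (x / 2)
  rw [h, Real.log_mul (by positivity) (by positivity), Real.log_exp]; ring

theorem EbrLog_eq {l : ℕ} (p : (Fin l → Bool) → ℝ) (hp1 : ∑ y, p y = 1) (v : Fin l → ℝ) :
    EbrLog p v = ∑ i, (Real.log (2 * Real.cosh (v i / 2)) - dmean p i * (v i / 2)) := by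
  rw [← sum_affine p hp1 (fun i => Real.log (2 * Real.cosh (v i / 2))) (fun i => v i / 2), EbrLog]
  refine Finset.sum_congr rfl fun y _ => ?_
  congr 1
  refine Finset.sum_congr rfl fun i _ => ?_
  rw [log_two_cosh]
  rcases signVal_cases (y i) with h' | h' <;> rw [h']
  · simp
  · have : -1 * v i / 2 = -(v i / 2) := by ring
    rw [this, Real.cosh_neg]; ring

theorem EbrLog_nonneg {l : ℕ} (p : (Fin l → Bool) → ℝ) (hp0 : ∀ y, 0 ≤ p y) (v : Fin l → ℝ) :
    0 ≤ EbrLog p v := by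
  refine Finset.sum_nonneg fun y _ => mul_nonneg (hp0 y) (Finset.sum_nonneg fun i _ => ?_)
  apply Real.log_nonneg
  linarith [Real.exp_pos (-(signVal (y i) * v i))]

theorem coord_bound (d t : ℝ) (h : d * sgn t < 0) :
    d ^ 2 / 2 ≤ (Real.log (2 * Real.cosh (t / 2)) - d * (t / 2))
      - (Real.log (2 * Real.cosh (2 * d / 2)) - d * (2 * d / 2)) := by
  have hdt : d * t ≤ 0 := by
    unfold sgn at h
    split_ifs at h with h0 <;> nlinarith
  have h1 : Real.log 2 ≤ Real.log (2 * Real.cosh (t / 2)) :=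
    Real.log_le_log (by norm_num) (by linarith [Real.one_le_cosh (t / 2)])
  have h2 : Real.log (2 * Real.cosh (2 * d / 2)) ≤ Real.log 2 + d ^ 2 / 2 := by
    have e : 2 * d / 2 = d := by ring
    rw [e, Real.log_mul (by norm_num) (Real.cosh_pos d).ne']
    have := Real.log_le_log (Real.cosh_pos d) (Real.cosh_le_exp_half_sq d)
    rw [Real.log_exp] at this
    linarith
  nlinarith

theorem binary_relevance_logistic_Hconsistency_bound
    (l : ℕ) (hl : 1 ≤ l)
    (p : (Fin l → Bool) → ℝ) (hp0 : ∀ y, 0 ≤ p y) (hp1 : ∑ y, p y = 1)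
    (v : Fin l → ℝ) :
    Eham p v - ⨅ w : Fin l → ℝ, Eham p w
      ≤ Real.sqrt (2 * l * (EbrLog p v - ⨅ w : Fin l → ℝ, EbrLog p w)) := by
  set d := dmean p with hd
  set b : Fin l → ℝ := fun i => max 0 (-(d i * sgn (v i))) with hb
  set w : Fin l → ℝ := fun i => if d i * sgn (v i) < 0 then 2 * d i else v i with hw
  have H1 : Eham p v - ∑ i, b i ≤ ⨅ w : Fin l → ℝ, Eham p w := by
    refine le_ciInf fun u => ?_
    rw [Eham_eq p hp1, Eham_eq p hp1, ← Finset.sum_sub_distrib]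
    refine Finset.sum_le_sum fun i _ => ?_
    have m0 : 0 ≤ b i := le_max_left _ _
    have m1 : -(d i * sgn (v i)) ≤ b i := le_max_right _ _
    rcases sgn_sq (v i) with h | h <;> rcases sgn_sq (u i) with h' | h' <;>
      rw [h] at m1 ⊢ <;> rw [h'] <;> linarith
  have H2 : ∑ i, b i ^ 2 / 2 ≤ EbrLog p v - EbrLog p w := by
    rw [EbrLog_eq p hp1, EbrLog_eq p hp1, ← Finset.sum_sub_distrib]
    refine Finset.sum_le_sum fun i _ => ?_
    by_cases h : d i * sgn (v i) < 0
    · have hwi : w i = 2 * d i := if_pos h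
      have hbi : b i ^ 2 = d i ^ 2 := by
        have : b i = -(d i * sgn (v i)) := max_eq_right (by linarith)
        rw [this]
        rcases sgn_sq (v i) with h | h <;> rw [h] <;> ring
      rw [hwi, hbi]
      exact coord_bound _ _ h
    · have hwi : w i = v i := if_neg h
      have hbi : b i = 0 := max_eq_left (by linarith)
      rw [hwi, hbi]; simp
  have H3 : ⨅ w : Fin l → ℝ, EbrLog p w ≤ EbrLog p w :=
    ciInf_le ⟨0, by rintro _ ⟨u, rfl⟩; exact EbrLog_nonneg p hp0 u⟩ w
  have H4 : (∑ i, b i) ^ 2 ≤ l * ∑ i, b i ^ 2 := by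
    simpa using sq_sum_le_card_mul_sum_sq (s := Finset.univ) (f := b)
  refine le_trans (by linarith : _ ≤ ∑ i, b i) (Real.le_sqrt_of_sq_le (H4.trans ?_))
  rw [← Finset.sum_div] at H2
  have hl0 : (0 : ℝ) ≤ l := Nat.cast_nonneg l
  nlinarith [mul_le_mul_of_nonneg_left (H2.trans (sub_le_sub_left H3 _)) hl0]
end
end

section
/- Let X and Y be nonempty finite types, P : X → Y → ℝ a joint probability mass function (P(x,y) ≥ 0 and ∑_{x,y} P(x,y) = 1) with marginal p(x) = ∑_y P(x,y). Let α be a type of hypotheses, H a nonempty subset of α, and ℓ, ℓ̃ : α → X → Y → ℝ two loss functions with 0 ≤ ℓ(h,x,y) ≤ 1 and 0 ≤ ℓ̃(h,x,y) ≤ B for all h ∈ H, x, y. For x with p(x) > 0 define the conditional errors C_ℓ(h,x) = (∑_y P(x,y)·ℓ(h,x,y))/p(x) and C_ℓ̃(h,x) = (∑_y P(x,y)·ℓ̃(h,x,y))/p(x), and the conditional regrets ΔC_ℓ(h,x) = C_ℓ(h,x) − inf_{h'∈H} C_ℓ(h',x), ΔC_ℓ̃(h,x) = C_ℓ̃(h,x)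 − inf_{h'∈H} C_ℓ̃(h',x). Define the risks R_ℓ(h) = ∑_{x,y} P(x,y)·ℓ(h,x,y), the best-in-class risks R*_ℓ = inf_{h∈H} R_ℓ(h), and the minimizability gaps M_ℓ = R*_ℓ − ∑_x p(x)·inf_{h∈H} C_ℓ(h,x) (similarly for ℓ̃). Let Γ : ℝ → ℝ be concave on [0,∞). If ΔC_ℓ(h,x) ≤ Γ(ΔC_ℓ̃(h,x)) for every h ∈ H and every x with p(x) > 0, then for every h ∈ H: R_ℓ(h) − R*_ℓ + M_ℓ ≤ Γ( R_ℓ̃(h) − R*_ℓ̃ + M_ℓ̃ ). -/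
noncomputable section
open Real

/-- Conditional error of loss `L` for hypothesis `h` at point `x`. -/
def condErr {X Y α : Type*} [Fintype Y] (P : X → Y → ℝ) (L : α → X → Y → ℝ)
    (h : α) (x : X) : ℝ :=
  (∑ y, P x y * L h x y) / (∑ y, P x y)

/-- Risk (generalization error) of loss `L` for hypothesis `h`. -/
def risk {X Y α : Type*} [Fintype X] [Fintype Y] (P : X → Y → ℝ)
    (L : α → X → Y → ℝ) (h : α) : ℝ :=
  ∑ x, ∑ y, P x y * L h x y

/-- Minimizability gap of loss `L` over the hypothesis set `H`. -/
def minimizabilityGap {X Y α : Type*} [Fintype X] [Fintype Y] (P : X → Y → ℝ)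
    (L : α → X → Y → ℝ) (H : Set α) : ℝ :=
  sInf ((fun h' => risk P L h') '' H)
    - ∑ x, (∑ y, P x y) * sInf ((fun h' => condErr P L h' x) '' H)

theorem excess_eq {X Y α : Type*} [Fintype X] [Fintype Y]
    (P : X → Y → ℝ) (hP0 : ∀ x y, 0 ≤ P x y) (H : Set α) (L : α → X → Y → ℝ) (h : α) :
    risk P L h - sInf ((fun h' => risk P L h') '' H) + minimizabilityGap P L H
      = ∑ x, (∑ y, P x y) *
        (condErr P L h x - sInf ((fun h' => condErr P L h' x) '' H)) := by
  have key : risk P L h = ∑ x, (∑ y, P x y) * condErr P L h x := by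
    unfold risk condErr
    refine Finset.sum_congr rfl fun x _ => ?_
    by_cases hp : ∑ y, P x y = 0
    · have h0 := (Finset.sum_eq_zero_iff_of_nonneg (fun y _ => hP0 x y)).1 hp
      rw [hp, zero_mul]
      exact Finset.sum_eq_zero fun y hy => by rw [h0 y hy, zero_mul]
    · rw [mul_div_cancel₀ _ hp]
  simp only [mul_sub, Finset.sum_sub_distrib]
  rw [← key]
  unfold minimizabilityGap
  ring

theorem tool_Gamma {X Y α : Type*} [Fintype X] [Fintype Y] [Nonempty X] [Nonempty Y]
    (P : X → Y → ℝ) (hP0 : ∀ x y, 0 ≤ P x y) (hP1 : ∑ x, ∑ y, P x y = 1)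
    (H : Set α) (hH : H.Nonempty)
    (ℓ ℓt : α → X → Y → ℝ) (B : ℝ)
    (hℓ : ∀ h ∈ H, ∀ x y, ℓ h x y ∈ Set.Icc (0 : ℝ) 1)
    (hℓt : ∀ h ∈ H, ∀ x y, ℓt h x y ∈ Set.Icc (0 : ℝ) B)
    (Γ : ℝ → ℝ) (hΓ : ConcaveOn ℝ (Set.Ici 0) Γ)
    (hcond : ∀ h ∈ H, ∀ x, 0 < ∑ y, P x y →
      condErr P ℓ h x - sInf ((fun h' => condErr P ℓ h' x) '' H)
        ≤ Γ (condErr P ℓt h x - sInf ((fun h' => condErr P ℓt h' x) '' H))) :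
    ∀ h ∈ H,
      risk P ℓ h - sInf ((fun h' => risk P ℓ h') '' H) + minimizabilityGap P ℓ H
        ≤ Γ (risk P ℓt h - sInf ((fun h' => risk P ℓt h') '' H)
            + minimizabilityGap P ℓt H) := by
  intro h hh
  rw [excess_eq P hP0 H ℓ h, excess_eq P hP0 H ℓt h]
  have hp : ∀ x, 0 ≤ ∑ y, P x y := fun x => Finset.sum_nonneg fun y _ => hP0 x y
  have hmem : ∀ x ∈ Finset.univ,
      condErr P ℓt h x - sInf ((fun h' => condErr P ℓt h' x) '' H) ∈ Set.Ici (0 : ℝ) := by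
    intro x _
    rw [Set.mem_Ici, sub_nonneg]
    refine csInf_le ⟨0, ?_⟩ ⟨h, hh, rfl⟩
    rintro _ ⟨h', hh', rfl⟩
    exact div_nonneg
      (Finset.sum_nonneg fun y _ => mul_nonneg (hP0 x y) (hℓt h' hh' x y).1) (hp x)
  have hJ := hΓ.le_map_sum (t := Finset.univ) (w := fun x => ∑ y, P x y)
    (fun x _ => hp x) hP1 hmem
  simp only [smul_eq_mul] at hJ
  refine le_trans (Finset.sum_le_sum fun x _ => ?_) hJ
  rcases (hp x).eq_or_lt with h0 | h0
  · rw [← h0, zero_mul, zero_mul]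
  · exact mul_le_mul_of_nonneg_left (hcond h hh x h0) h0.le
end
end

section
/- Let l ≥ 1, Y = {−1,+1}^l, p a conditional label distribution on Y, and let L̄ be the normalized Hamming loss L̄(y', y) = (1/l)·∑_{i=1}^{l} 1{y'_i ≠ y_i}, with conditional costs c_{y'} = ∑_{y∈Y} p(y)·L̄(y', y). For a positive probability vector s on Y define the multi-label logistic conditional error G_log(s) = −∑_{y'∈Y} (1 − c_{y'})·log s_{y'}. If ĥ ∈ Y satisfies s_{ĥ} = max_{y'∈Y} s_{y'}, then c_{ĥ} − min_{y'∈Y} c_{y'} ≤ 2·√( G_log(s) − inf_{s'} G_log(s') ), where the infimum is over all positive probability vectors s' on Y. -/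
noncomputable section
open Real

/-- Normalized Hamming loss on label vectors encoded as Boolean vectors. -/
def hammingLoss (l : ℕ) (y' y : Fin l → Bool) : ℝ :=
  (1 / (l : ℝ)) * ∑ i, (if y' i = y i then (0 : ℝ) else 1)

/-- Conditional cost `c_{y'} = ∑_y p(y) L̄(y', y)` of predicting the label vector `y'`. -/
def condCost {l : ℕ} (p : (Fin l → Bool) → ℝ)
    (L : (Fin l → Bool) → (Fin l → Bool) → ℝ) (y' : Fin l → Bool) : ℝ :=
  ∑ y, p y * L y' y

/-- The set of positive probability vectors on `Y = {−1,+1}^l`. -/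
def probVecs (l : ℕ) : Set ((Fin l → Bool) → ℝ) :=
  {s | (∀ y', 0 < s y') ∧ ∑ y', s y' = 1}

/-- Multi-label logistic conditional error `G_log(s) = −∑_{y'} (1 − c_{y'}) log s_{y'}`. -/
def Glog {l : ℕ} (c : (Fin l → Bool) → ℝ) (s : (Fin l → Bool) → ℝ) : ℝ :=
  -∑ y', (1 - c y') * Real.log (s y')

theorem lb_aux (x b : ℝ) (hx : 0 < x) (hb : 0 ≤ b) (hbx : b + 2 * x ≤ 1) :
    x ^ 2 ≤ (b + 2 * x) * Real.log (1 + x) + b * Real.log (1 - x) := by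
  have h1 := Real.le_log_one_add_of_nonneg hx.le
  have hp : 0 < 1 - x ^ 2 := by nlinarith
  have h2 := Real.one_sub_inv_le_log_of_pos hp
  have h3 : Real.log (1 - x ^ 2) = Real.log (1 + x) + Real.log (1 - x) := by
    rw [← Real.log_mul (by linarith) (by linarith)]; ring_nf
  have h4 : Real.log (1 - x ^ 2) ≤ 0 := Real.log_nonpos hp.le (by nlinarith)
  have e : (b + 2 * x) * Real.log (1 + x) + b * Real.log (1 - x)
      = b * Real.log (1 - x ^ 2) + 2 * x * Real.log (1 + x) := by rw [h3]; ring
  rw [e]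
  have h5 : (1 - 2 * x) * Real.log (1 - x ^ 2) ≤ b * Real.log (1 - x ^ 2) :=
    mul_le_mul_of_nonpos_right (by linarith) h4
  have h6 : (1 - 2 * x) * (1 - (1 - x ^ 2)⁻¹) ≤ (1 - 2 * x) * Real.log (1 - x ^ 2) :=
    mul_le_mul_of_nonneg_left h2 (by linarith)
  have h7 : 2 * x * (2 * x / (x + 2)) ≤ 2 * x * Real.log (1 + x) :=
    mul_le_mul_of_nonneg_left h1 (by linarith)
  have h8 : (1 - 2 * x) * (1 - (1 - x ^ 2)⁻¹) + 2 * x * (2 * x / (x + 2)) - x ^ 2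
      = x ^ 3 * (2 + x ^ 2) / ((1 - x ^ 2) * (x + 2)) := by
    field_simp
    ring
  have h9 : 0 ≤ x ^ 3 * (2 + x ^ 2) / ((1 - x ^ 2) * (x + 2)) := by positivity
  linarith

theorem lb_key (u v x a b : ℝ) (hu : 0 < u) (huv : u ≤ v) (hx : 0 < x) (hb : 0 ≤ b)
    (ha : a = b + 2 * x) (ha1 : a ≤ 1) :
    a * Real.log u + b * Real.log v + x ^ 2 ≤
      a * Real.log ((u + v) / 2 * (1 + x)) + b * Real.log ((u + v) / 2 * (1 - x)) := by
  have hv : 0 < v := by linarith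
  have hm : 0 < (u + v) / 2 := by linarith
  rw [Real.log_mul hm.ne' (by linarith), Real.log_mul hm.ne' (by linarith)]
  have h := lb_aux x b hx hb (by linarith)
  have h1 : Real.log u ≤ Real.log ((u + v) / 2) := Real.log_le_log hu (by linarith)
  have h2 : Real.log u + Real.log v ≤ Real.log ((u + v) / 2) + Real.log ((u + v) / 2) := by
    rw [← Real.log_mul hu.ne' hv.ne', ← Real.log_mul hm.ne' hm.ne']
    exact Real.log_le_log (by positivity) (by nlinarith [sq_nonneg (u - v)])
  have h3 := mul_le_mul_of_nonneg_left h1 hx.le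
  have h4 := mul_le_mul_of_nonneg_left h2 hb
  subst ha
  nlinarith

theorem lb_cost {l : ℕ} (hl : 1 ≤ l)
    (p : (Fin l → Bool) → ℝ) (hp0 : ∀ y, 0 ≤ p y) (hp1 : ∑ y, p y = 1) (y' : Fin l → Bool) :
    0 ≤ condCost p (hammingLoss l) y' ∧ condCost p (hammingLoss l) y' ≤ 1 := by
  have hl' : (0 : ℝ) < l := by exact_mod_cast hl
  have h0 : ∀ y, 0 ≤ hammingLoss l y' y := fun y => by
    unfold hammingLoss
    refine mul_nonneg (by positivity) (Finset.sum_nonneg fun i _ => ?_)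
    split_ifs <;> norm_num
  have h1 : ∀ y, hammingLoss l y' y ≤ 1 := fun y => by
    unfold hammingLoss
    have : ∑ i, (if y' i = y i then (0 : ℝ) else 1) ≤ ∑ i : Fin l, (1 : ℝ) :=
      Finset.sum_le_sum fun i _ => by split_ifs <;> norm_num
    simp only [Finset.sum_const, Finset.card_univ, Fintype.card_fin, nsmul_eq_mul, mul_one] at this
    rw [one_div, inv_mul_le_iff₀ hl']
    linarith
  refine ⟨Finset.sum_nonneg fun y _ => mul_nonneg (hp0 y) (h0 y), ?_⟩
  rw [← hp1]
  exact Finset.sum_le_sum fun y _ => mul_le_of_le_one_right (hp0 y) (h1 y)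

theorem lb_split {α : Type*} [Fintype α] [DecidableEq α] (y h : α) (hne : y ≠ h) (f : α → ℝ) :
    ∑ z, f z = f y + f h + ∑ z ∈ (Finset.univ.erase y).erase h, f z := by
  rw [← Finset.add_sum_erase _ _ (Finset.mem_univ y),
    ← Finset.add_sum_erase (Finset.univ.erase y) f (a := h) (by simp [hne.symm])]
  ring

theorem log_bound_hamming (l : ℕ) (hl : 1 ≤ l)
    (p : (Fin l → Bool) → ℝ) (hp0 : ∀ y, 0 ≤ p y) (hp1 : ∑ y, p y = 1)
    (s : (Fin l → Bool) → ℝ) (hs : s ∈ probVecs l)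
    (hhat : Fin l → Bool) (hmax : ∀ y', s y' ≤ s hhat) :
    condCost p (hammingLoss l) hhat - ⨅ y' : Fin l → Bool, condCost p (hammingLoss l) y'
      ≤ 2 * Real.sqrt (Glog (condCost p (hammingLoss l)) s
          - sInf ((fun s' => Glog (condCost p (hammingLoss l)) s') '' probVecs l)) := by
  obtain ⟨hs0, hs1⟩ := hs
  have hc := lb_cost hl p hp0 hp1
  generalize condCost p (hammingLoss l) = c at hc ⊢
  obtain ⟨y, hy⟩ := exists_eq_ciInf_of_finite (f := c)
  rw [← hy]
  rcases le_or_gt (c hhat) (c y) with hle | hlt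
  · have := Real.sqrt_nonneg (Glog c s - sInf ((fun s' => Glog c s') '' probVecs l))
    linarith
  have hne : y ≠ hhat := by rintro rfl; exact lt_irrefl _ hlt
  have hbdd : BddBelow ((fun s' => Glog c s') '' probVecs l) := by
    refine ⟨0, ?_⟩
    rintro _ ⟨t, ⟨ht0, ht1⟩, rfl⟩
    show 0 ≤ -∑ z, (1 - c z) * Real.log (t z)
    rw [neg_nonneg]
    refine Finset.sum_nonpos fun z _ => mul_nonpos_of_nonneg_of_nonpos ?_ ?_
    · linarith [(hc z).2]
    · refine Real.log_nonpos (ht0 z).le ?_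
      rw [← ht1]
      exact Finset.single_le_sum (fun w _ => (ht0 w).le) (Finset.mem_univ z)
  obtain ⟨x, hx⟩ : ∃ x, x = (c hhat - c y) / 2 := ⟨_, rfl⟩
  have hx0 : 0 < x := by rw [hx]; linarith
  have hx1 : x < 1 := by rw [hx]; linarith [(hc hhat).2, (hc y).1]
  have key := lb_key (s y) (s hhat) x (1 - c y) (1 - c hhat) (hs0 y) (hmax y) hx0
    (by linarith [(hc hhat).2]) (by rw [hx]; ring) (by linarith [(hc y).1])
  have hm : 0 < (s y + s hhat) / 2 := by linarith [hs0 y, hs0 hhat]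
  let t : (Fin l → Bool) → ℝ := fun z =>
    if z = y then (s y + s hhat) / 2 * (1 + x) else
    if z = hhat then (s y + s hhat) / 2 * (1 - x) else s z
  have ty : t y = (s y + s hhat) / 2 * (1 + x) := by simp [t]
  have th : t hhat = (s y + s hhat) / 2 * (1 - x) := by simp [t, hne.symm]
  have tz : ∀ z ∈ (Finset.univ.erase y).erase hhat, t z = s z := by
    intro z hz
    simp only [Finset.mem_erase, Finset.mem_univ, and_true] at hz
    simp [t, hz.1, hz.2]
  have htmem : t ∈ probVecs l := by
    constructor
    · intro z
      simp only [t]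
      split_ifs
      · exact mul_pos hm (by linarith)
      · exact mul_pos hm (by linarith)
      · exact hs0 z
    · rw [lb_split y hhat hne, Finset.sum_congr rfl tz, ty, th]
      rw [lb_split y hhat hne] at hs1
      linarith
  have hinf : sInf ((fun s' => Glog c s') '' probVecs l) ≤ Glog c t :=
    csInf_le hbdd ⟨t, htmem, rfl⟩
  have hG : x ^ 2 ≤ Glog c s - Glog c t := by
    unfold Glog
    rw [lb_split y hhat hne, lb_split y hhat hne (fun z => (1 - c z) * Real.log (t z)), ty, th,
      Finset.sum_congr rfl (fun z hz => by rw [tz z hz] :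
        ∀ z ∈ (Finset.univ.erase y).erase hhat,
          (1 - c z) * Real.log (t z) = (1 - c z) * Real.log (s z))]
    linarith
  have := Real.le_sqrt_of_sq_le (hG.trans (sub_le_sub_left hinf _))
  linarith
end
end

section
/- Let l ≥ 1, Y = {−1,+1}^l, p a conditional label distribution on Y, L̄ : Y × Y → [0,1] an arbitrary multi-label loss, and c_{y'} = ∑_{y∈Y} p(y)·L̄(y', y). For a positive probability vector s on Y define the multi-label logistic conditional error G_log(s) = −∑_{y'∈Y} (1 − c_{y'})·log s_{y'}. If ĥ ∈ Y satisfies s_{ĥ} = max_{y'∈Y} s_{y'}, then c_{ĥ} − min_{y'∈Y} c_{y'} ≤ 2·√( G_log(s) − inf_{s'} G_log(s') ), where the infimum is over all positive probability vectors s' on Y. -/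
noncomputable section
open Real

lemma aux_ineq (x : ℝ) (h0 : 0 ≤ x) (h1 : x ≤ 1/2) :
    x^2 ≤ (1+x) * Real.log (1+x) + (1-x) * Real.log (1-x) := by
  let g : ℝ → ℝ := fun x => (1+x) * Real.log (1+x) + (1-x) * Real.log (1-x) - x^2
  have hd : ∀ x ∈ Set.Icc (0:ℝ) (1/2),
      HasDerivAt g (Real.log (1+x) - Real.log (1-x) - 2*x) x := by
    intro x hx
    have e1 : (1+x) ≠ 0 := by linarith [hx.1]
    have e2 : (1-x) ≠ 0 := by linarith [hx.2]
    have d1 : HasDerivAt (fun x : ℝ => 1+x) 1 x := (hasDerivAt_id x).const_add 1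
    have d2 : HasDerivAt (fun x : ℝ => 1-x) (-1) x := (hasDerivAt_id x).const_sub 1
    have d3 : HasDerivAt (fun x : ℝ => x^2) (2*x) x := by
      simpa using hasDerivAt_pow 2 x
    refine (((d1.mul (d1.log e1)).add (d2.mul (d2.log e2))).sub d3).congr_deriv ?_
    have f1 : (1+x) * (1/(1+x)) = 1 := mul_one_div_cancel e1
    have f2 : (1-x) * (-1/(1-x)) = -1 := mul_div_cancel₀ _ e2
    rw [f1, f2]
    ring
  have hm : MonotoneOn g (Set.Icc (0:ℝ) (1/2)) := by
    apply monotoneOn_of_deriv_nonneg (convex_Icc _ _)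
    · exact fun x hx => (hd x hx).continuousAt.continuousWithinAt
    · intro x hx
      exact (hd x (interior_subset hx)).differentiableAt.differentiableWithinAt
    · intro x hx
      have hx := interior_subset hx
      rw [(hd x hx).deriv]
      have hp : 0 < 1 - x := by linarith [hx.2]
      have hu : 0 ≤ 2*x/(1-x) := div_nonneg (by linarith [hx.1]) hp.le
      have := Real.le_log_one_add_of_nonneg hu
      have e : 1 + 2*x/(1-x) = (1+x)/(1-x) := by field_simp; ring
      rw [e, Real.log_div (by linarith [hx.1]) hp.ne'] at this
      have e' : 2 * (2*x/(1-x)) / (2*x/(1-x) + 2) = 2*x := by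
        have : 2*x/(1-x) + 2 = 2/(1-x) := by field_simp; ring
        rw [this]; field_simp
      linarith
  have := hm (a := 0) (b := x) ⟨le_rfl, by norm_num⟩ ⟨h0, h1⟩ h0
  simp only [g] at this
  norm_num at this
  linarith

lemma aux_two (a b u v : ℝ) (hb : 0 ≤ b) (hab : b ≤ a) (ha : a ≤ 1)
    (hu : 0 < u) (huv : u ≤ v) :
    ((a-b)/2)^2 ≤ a * (Real.log ((u+v)/2 * (1+(a-b)/2)) - Real.log u)
      + b * (Real.log ((u+v)/2 * (1-(a-b)/2)) - Real.log v) := by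
  have hv : 0 < v := hu.trans_le huv
  set x := (a-b)/2 with hx
  have x0 : 0 ≤ x := by linarith
  have x1 : x ≤ 1/2 := by linarith
  have hm : 0 < (u+v)/2 := by linarith
  rw [Real.log_mul hm.ne' (by linarith), Real.log_mul hm.ne' (by linarith)]
  have h1 : Real.log u ≤ Real.log ((u+v)/2) := Real.log_le_log hu (by linarith)
  have h2 : Real.log u + Real.log v ≤ 2 * Real.log ((u+v)/2) := by
    rw [← Real.log_mul hu.ne' hv.ne']
    have : 2 * Real.log ((u+v)/2) = Real.log (((u+v)/2)^2) := by
      rw [Real.log_pow]; norm_num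
    rw [this]
    exact Real.log_le_log (mul_pos hu hv) (by nlinarith [sq_nonneg (u-v)])
  have h3 := aux_ineq x x0 x1
  have h4 : Real.log (1+x) + Real.log (1-x) ≤ 0 := by
    rw [← Real.log_mul (by linarith) (by linarith)]
    exact Real.log_nonpos (by nlinarith) (by nlinarith)
  have h5 : 0 ≤ (1 - (a+b)/2) * -(Real.log (1+x) + Real.log (1-x)) :=
    mul_nonneg (by linarith) (by linarith)
  have h6 := mul_nonneg (sub_nonneg.2 hab) (sub_nonneg.2 h1)
  have h7 := mul_nonneg hb (sub_nonneg.2 h2)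
  have ea : a = (a+b)/2 + x := by rw [hx]; ring
  have eb : b = (a+b)/2 - x := by rw [hx]; ring
  have h8 : x^2 ≤ a * Real.log (1+x) + b * Real.log (1-x) := by
    have : a * Real.log (1+x) + b * Real.log (1-x) =
      ((a+b)/2 + x) * Real.log (1+x) + ((a+b)/2 - x) * Real.log (1-x) := by
      rw [← ea, ← eb]
    nlinarith
  nlinarith

theorem log_bound_general (l : ℕ) (hl : 1 ≤ l)
    (p : (Fin l → Bool) → ℝ) (hp0 : ∀ y, 0 ≤ p y) (hp1 : ∑ y, p y = 1)
    (L : (Fin l → Bool) → (Fin l → Bool) → ℝ)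
    (hL : ∀ y' y, L y' y ∈ Set.Icc (0 : ℝ) 1)
    (s : (Fin l → Bool) → ℝ) (hs : s ∈ probVecs l)
    (hhat : Fin l → Bool) (hmax : ∀ y', s y' ≤ s hhat) :
    condCost p L hhat - ⨅ y' : Fin l → Bool, condCost p L y'
      ≤ 2 * Real.sqrt (Glog (condCost p L) s
          - sInf ((fun s' => Glog (condCost p L) s') '' probVecs l)) := by
  have hc0 : ∀ y, 0 ≤ condCost p L y := fun y =>
    Finset.sum_nonneg fun z _ => mul_nonneg (hp0 z) (hL y z).1
  have hc1 : ∀ y, condCost p L y ≤ 1 := fun y => by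
    rw [← hp1]
    exact Finset.sum_le_sum fun z _ => mul_le_of_le_one_right (hp0 z) (hL y z).2
  generalize condCost p L = c at *
  obtain ⟨ys, hys⟩ := exists_eq_ciInf_of_finite (f := c)
  have hmin : c ys ≤ c hhat := hys ▸ ciInf_le (Set.finite_range c).bddBelow hhat
  rw [← hys]
  by_cases hne : ys = hhat
  · rw [hne, sub_self]; positivity
  have hbdd : BddBelow ((fun s' => Glog c s') '' probVecs l) := by
    refine ⟨0, ?_⟩
    rintro _ ⟨t, ht, rfl⟩
    simp only [Glog, Left.nonneg_neg_iff]
    refine Finset.sum_nonpos fun y _ => mul_nonpos_of_nonneg_of_nonpos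
      (by linarith [hc1 y]) (Real.log_nonpos (ht.1 y).le ?_)
    rw [← ht.2]
    exact Finset.single_le_sum (f := t) (fun z _ => (ht.1 z).le) (Finset.mem_univ y)
  set x := ((1 - c ys) - (1 - c hhat))/2 with hx
  have x0 : 0 ≤ x := by linarith
  have x1 : x ≤ 1/2 := by linarith [hc1 hhat, hc0 ys]
  have hu := hs.1 ys
  have hv := hs.1 hhat
  let t : (Fin l → Bool) → ℝ := fun y =>
    if y = ys then (s ys + s hhat)/2 * (1+x)
    else if y = hhat then (s ys + s hhat)/2 * (1-x) else s y
  have t1 : t ys = (s ys + s hhat)/2 * (1+x) := by simp [t]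
  have t2 : t hhat = (s ys + s hhat)/2 * (1-x) := by simp [t, Ne.symm hne]
  have t3 : ∀ y, y ≠ ys ∧ y ≠ hhat → t y = s y := fun y hy => by simp [t, hy.1, hy.2]
  have ht : t ∈ probVecs l := by
    constructor
    · intro y
      by_cases h1 : y = ys
      · rw [h1, t1]; exact mul_pos (by linarith) (by linarith)
      by_cases h2 : y = hhat
      · rw [h2, t2]; exact mul_pos (by linarith) (by linarith)
      rw [t3 y ⟨h1, h2⟩]; exact hs.1 y
    · have : ∑ y, (t y - s y) = (t ys - s ys) + (t hhat - s hhat) :=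
        Fintype.sum_eq_add ys hhat hne fun y hy => by rw [t3 y hy, sub_self]
      rw [Finset.sum_sub_distrib, hs.2, t1, t2] at this
      linarith
  have hG : Glog c s - Glog c t = (1 - c ys) * (Real.log (t ys) - Real.log (s ys))
      + (1 - c hhat) * (Real.log (t hhat) - Real.log (s hhat)) := by
    have : ∑ y, (1 - c y) * (Real.log (t y) - Real.log (s y)) = _ :=
      Fintype.sum_eq_add ys hhat hne fun y hy => by rw [t3 y hy, sub_self, mul_zero]
    rw [← this]
    simp only [Glog, mul_sub, Finset.sum_sub_distrib]
    ring
  have key := aux_two (1 - c ys) (1 - c hhat) (s ys) (s hhat) (by linarith [hc1 hhat])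
    (by linarith) (by linarith [hc0 ys]) hu (hmax ys)
  rw [← hx, ← t1, ← t2, ← hG] at key
  have hinf : sInf ((fun s' => Glog c s') '' probVecs l) ≤ Glog c t :=
    csInf_le hbdd ⟨t, ht, rfl⟩
  have := Real.le_sqrt_of_sq_le (key.trans (sub_le_sub_left hinf (Glog c s)))
  linarith
end
end

section
/- Let l ≥ 1, Y = {−1,+1}^l, p a conditional label distribution on Y, L̄ : Y × Y → [0,1] a multi-label loss, and c_{y'} = ∑_{y∈Y} p(y)·L̄(y', y). For a positive probability vector s on Y define the multi-label sum-exponential conditional error G_exp(s) = ∑_{y'∈Y} (1 − c_{y'})·(1/s_{y'} − 1). If ĥ ∈ Y satisfies s_{ĥ} = max_{y'∈Y} s_{y'}, then c_{ĥ} − min_{y'∈Y} c_{y'} ≤ 2·√( G_exp(s) − inf_{s'} G_exp(s') ), where the infimum is over all positive probability vectors s' on Y. -/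
noncomputable section
open Real

/-- Multi-label sum-exponential conditional error
`G_exp(s) = ∑_{y'} (1 − c_{y'}) (1/s_{y'} − 1)`. -/
def Gexp {l : ℕ} (c : (Fin l → Bool) → ℝ) (s : (Fin l → Bool) → ℝ) : ℝ :=
  ∑ y', (1 - c y') * (1 / s y' - 1)

/-- Two-coordinate inequality behind the bound. -/
theorem two_point_bound (A B u v d : ℝ) (hd : d = A - B) (hd0 : 0 < d) (hB : 0 ≤ B)
    (hA : A ≤ 1) (hu : 0 < u) (huv : u ≤ v) (hT : u + v ≤ 1) :
    d ^ 2 / 4 ≤ (A * (1 / u - 1) - A * (1 / ((u + v) * (4 + d) / 8) - 1))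
      + (B * (1 / v - 1) - B * (1 / ((u + v) * (4 - d) / 8) - 1)) := by
  have hv : 0 < v := by linarith
  have hTp : 0 < u + v := by linarith
  have h4 : 0 < 4 - d := by linarith
  have h4' : 0 < 4 + d := by linarith
  have e : (A * (1 / u - 1) - A * (1 / ((u + v) * (4 + d) / 8) - 1))
      + (B * (1 / v - 1) - B * (1 / ((u + v) * (4 - d) / 8) - 1))
      = (v - u) * (A * v - B * u) / (u * v * (u + v))
        + 2 * d * (A * (4 - d) - B * (4 + d)) / ((u + v) * ((4 + d) * (4 - d))) := by
    field_simp
    ring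
  rw [e]
  have h1 : 0 ≤ (v - u) * (A * v - B * u) / (u * v * (u + v)) := by
    apply div_nonneg
    · apply mul_nonneg (by linarith)
      nlinarith
    · positivity
  have h2 : d ^ 2 / 4 ≤ 2 * d * (A * (4 - d) - B * (4 + d)) / ((u + v) * ((4 + d) * (4 - d))) := by
    have h3 : A * (4 - d) - B * (4 + d) = d * (4 - (A + B)) := by rw [hd]; ring
    rw [h3, le_div_iff₀ (by positivity)]
    have h5 : (u + v) * ((4 + d) * (4 - d)) ≤ 16 := by
      have : (u + v) * ((4 + d) * (4 - d)) ≤ 1 * ((4 + d) * (4 - d)) := by gcongr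
      nlinarith
    have h6 : 2 ≤ 4 - (A + B) := by linarith
    nlinarith [mul_le_mul_of_nonneg_left h5 (sq_nonneg d),
      mul_le_mul_of_nonneg_left h6 (sq_nonneg d)]
  linarith

theorem comp_bound_sum_exponential (l : ℕ) (hl : 1 ≤ l)
    (p : (Fin l → Bool) → ℝ) (hp0 : ∀ y, 0 ≤ p y) (hp1 : ∑ y, p y = 1)
    (L : (Fin l → Bool) → (Fin l → Bool) → ℝ)
    (hL : ∀ y' y, L y' y ∈ Set.Icc (0 : ℝ) 1)
    (s : (Fin l → Bool) → ℝ) (hs : s ∈ probVecs l)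
    (hhat : Fin l → Bool) (hmax : ∀ y', s y' ≤ s hhat) :
    condCost p L hhat - ⨅ y' : Fin l → Bool, condCost p L y'
      ≤ 2 * Real.sqrt (Gexp (condCost p L) s
          - sInf ((fun s' => Gexp (condCost p L) s') '' probVecs l)) := by
  obtain ⟨hs0, hs1⟩ := hs
  set c := condCost p L with hc
  have hc0 : ∀ y, 0 ≤ c y := fun y =>
    Finset.sum_nonneg fun z _ => mul_nonneg (hp0 z) (hL y z).1
  have hc1 : ∀ y, c y ≤ 1 := fun y => by
    rw [← hp1]
    exact Finset.sum_le_sum fun z _ => mul_le_of_le_one_right (hp0 z) (hL y z).2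
  obtain ⟨b, hb⟩ := exists_eq_ciInf_of_finite (f := c)
  rw [← hb]
  by_cases hd : c hhat - c b ≤ 0
  · exact hd.trans (by positivity)
  push Not at hd
  have hne : b ≠ hhat := by
    rintro rfl
    simp at hd
  set d := c hhat - c b with hdd
  have hd1 : d ≤ 1 := by linarith [hc0 b, hc1 hhat]
  have hT : s b + s hhat ≤ 1 := by
    rw [← hs1, ← Finset.sum_pair hne]
    exact Finset.sum_le_sum_of_subset_of_nonneg (Finset.subset_univ _) fun y _ _ => (hs0 y).le
  have key := two_point_bound (1 - c b) (1 - c hhat) (s b) (s hhat) d (by rw [hdd]; ring) hd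
    (by linarith [hc1 hhat]) (by linarith [hc0 b]) (hs0 b) (hmax b) hT
  have hbdd : BddBelow ((fun s' => Gexp c s') '' probVecs l) := by
    refine ⟨0, ?_⟩
    rintro _ ⟨t, ⟨ht0, ht1⟩, rfl⟩
    refine Finset.sum_nonneg fun y _ => mul_nonneg (by linarith [hc1 y]) ?_
    have : t y ≤ 1 := by
      rw [← ht1]
      exact Finset.single_le_sum (fun z _ => (ht0 z).le) (Finset.mem_univ y)
    have := (one_le_div (ht0 y)).2 this
    linarith
  let t : (Fin l → Bool) → ℝ := fun y =>
    if y = b then (s b + s hhat) * (4 + d) / 8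
    else if y = hhat then (s b + s hhat) * (4 - d) / 8 else s y
  have htb : t b = (s b + s hhat) * (4 + d) / 8 := by simp [t]
  have hth : t hhat = (s b + s hhat) * (4 - d) / 8 := by simp [t, hne.symm]
  have hto : ∀ y, y ≠ b ∧ y ≠ hhat → t y = s y := fun y hy => by simp [t, hy.1, hy.2]
  have hTp : 0 < s b + s hhat := add_pos (hs0 b) (hs0 hhat)
  have ht : t ∈ probVecs l := by
    constructor
    · intro y
      by_cases h1 : y = b
      · rw [h1, htb]; positivity
      by_cases h2 : y = hhat
      · rw [h2, hth]
        have : 0 < 4 - d := by linarith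
        positivity
      rw [hto y ⟨h1, h2⟩]
      exact hs0 y
    · have := Fintype.sum_eq_add (f := fun y => t y - s y) b hhat hne
        (fun y hy => by simp [hto y hy])
      rw [Finset.sum_sub_distrib, hs1, htb, hth] at this
      linarith
  have hG : Gexp c s - Gexp c t =
      ((1 - c b) * (1 / s b - 1) - (1 - c b) * (1 / t b - 1))
      + ((1 - c hhat) * (1 / s hhat - 1) - (1 - c hhat) * (1 / t hhat - 1)) := by
    unfold Gexp
    rw [← Finset.sum_sub_distrib]
    exact Fintype.sum_eq_add b hhat hne (fun y hy => by simp [hto y hy])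
  rw [htb, hth] at hG
  have hinf : sInf ((fun s' => Gexp c s') '' probVecs l) ≤ Gexp c t :=
    csInf_le hbdd ⟨t, ht, rfl⟩
  have := Real.le_sqrt_of_sq_le (x := d / 2)
    (y := Gexp c s - sInf ((fun s' => Gexp c s') '' probVecs l)) (by
      have : (d / 2) ^ 2 = d ^ 2 / 4 := by ring
      linarith)
  linarith
end
end

section
/- Let l ≥ 1, Y = {−1,+1}^l with n = 2^l, p a conditional label distribution on Y, L̄ : Y × Y → [0,1] a multi-label loss, c_{y'} = ∑_{y∈Y} p(y)·L̄(y', y), and q ∈ (0,1). For a positive probability vector s on Y define the multi-label generalized cross-entropy conditional error G_q(s) = (1/q)·∑_{y'∈Y} (1 − c_{y'})·(1 − s_{y'}^q). If ĥ ∈ Y satisfies s_{ĥ} = max_{y'∈Y} s_{y'}, then c_{ĥ} − min_{y'∈Y} c_{y'} ≤ 2·√( n^q · ( G_q(s) − inf_{s'} G_q(s') ) ), where the infimum is over all positive probability vectors s' on Y. -/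
noncomputable section
open Real

/-- Multi-label generalized cross-entropy conditional error
`G_q(s) = (1/q) ∑_{y'} (1 − c_{y'}) (1 − s_{y'}^q)`. -/
def Ggce {l : ℕ} (q : ℝ) (c : (Fin l → Bool) → ℝ) (s : (Fin l → Bool) → ℝ) : ℝ :=
  (1 / q) * ∑ y', (1 - c y') * (1 - s y' ^ q)

lemma aux_log (A B d : ℝ) (hA : A ≤ 1) (hB : 0 ≤ B) (hd : 0 < d) (hAB : A - B = 2 * d) :
    d ^ 2 ≤ A * Real.log (1 + d) + B * Real.log (1 - d) := by
  have hd2 : d ≤ 1 / 2 := by linarith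
  have h1 : 2 * d ≤ Real.log (1 + d) - Real.log (1 - d) := by
    rw [← Real.log_div (by linarith) (by linarith)]
    have h := Real.le_log_one_add_of_nonneg (x := 2 * d / (1 - d))
      (div_nonneg (by linarith) (by linarith))
    have hne : (1 - d) ≠ 0 := by linarith
    have e1 : 1 + 2 * d / (1 - d) = (1 + d) / (1 - d) := by field_simp; ring
    have e2 : 2 * (2 * d / (1 - d)) / (2 * d / (1 - d) + 2) = 2 * d := by
      have : 2 * d / (1 - d) + 2 = 2 / (1 - d) := by field_simp; ring
      rw [this]; field_simp
    rw [e1, e2] at h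
    exact h
  have h2 : -(d ^ 2) / (1 - d ^ 2) ≤ Real.log (1 + d) + Real.log (1 - d) := by
    rw [← Real.log_mul (by linarith) (by linarith)]
    have hpos : 0 < (1 + d) * (1 - d) := mul_pos (by linarith) (by linarith)
    have h := Real.one_sub_inv_le_log_of_pos hpos
    have e : 1 - ((1 + d) * (1 - d))⁻¹ = -(d ^ 2) / (1 - d ^ 2) := by
      have e0 : (1 + d) * (1 - d) = 1 - d ^ 2 := by ring
      rw [e0] at hpos ⊢
      field_simp
      ring
    rw [e] at h
    exact h
  have h3 : -(d ^ 2) ≤ (1 - d) * (-(d ^ 2) / (1 - d ^ 2)) := by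
    have e : (1 - d) * (-(d ^ 2) / (1 - d ^ 2)) = -(d ^ 2 / (1 + d)) := by
      have hne : (1 - d) ≠ 0 := by linarith
      have hne' : (1 + d) ≠ 0 := by linarith
      have e0 : 1 - d ^ 2 = (1 + d) * (1 - d) := by ring
      rw [e0]
      field_simp
    rw [e]
    have : d ^ 2 / (1 + d) ≤ d ^ 2 := div_le_self (sq_nonneg d) (by linarith)
    linarith
  have hneg : -(d ^ 2) / (1 - d ^ 2) ≤ 0 :=
    div_nonpos_of_nonpos_of_nonneg (by nlinarith) (by nlinarith)
  have hm0 : 0 ≤ A - d := by linarith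
  have h4 : (A - d) * (-(d ^ 2) / (1 - d ^ 2)) ≤ (A - d) * (Real.log (1 + d) + Real.log (1 - d)) :=
    mul_le_mul_of_nonneg_left h2 hm0
  have h5 : (1 - d) * (-(d ^ 2) / (1 - d ^ 2)) ≤ (A - d) * (-(d ^ 2) / (1 - d ^ 2)) :=
    mul_le_mul_of_nonpos_right (by linarith) hneg
  have h6 : d * (2 * d) ≤ d * (Real.log (1 + d) - Real.log (1 - d)) :=
    mul_le_mul_of_nonneg_left h1 hd.le
  have hB' : B = A - 2 * d := by linarith
  subst hB'
  nlinarith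

lemma aux_rpow (q x : ℝ) (hx : 0 < x) : q * Real.log x ≤ x ^ q - 1 := by
  rw [Real.rpow_def_of_pos hx]
  have := Real.add_one_le_exp (Real.log x * q)
  linarith

lemma aux_conc (q u v δ : ℝ) (hq : q ∈ Set.Ioo (0 : ℝ) 1) (hv : 0 < v) (huv : v ≤ u)
    (hδ : 0 < δ) : (u + δ) ^ q - u ^ q ≤ (v + δ) ^ q - v ^ q := by
  have hc := Real.concaveOn_rpow hq.1.le hq.2.le
  have hD : 0 < u + δ - v := by linarith
  have key : ∀ a b : ℝ, 0 ≤ a → 0 ≤ b → a + b = 1 →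
      a * v ^ q + b * (u + δ) ^ q ≤ (a * v + b * (u + δ)) ^ q := fun a b ha hb hab => by
    have := hc.2 (Set.mem_Ici.2 hv.le) (Set.mem_Ici.2 (by linarith : (0:ℝ) ≤ u + δ)) ha hb hab
    simpa using this
  have ha : 0 ≤ δ / (u + δ - v) := by positivity
  have hb : 0 ≤ (u - v) / (u + δ - v) := div_nonneg (by linarith) hD.le
  have hab : δ / (u + δ - v) + (u - v) / (u + δ - v) = 1 := by
    rw [← add_div, div_eq_one_iff_eq hD.ne']; ring
  have k1 := key _ _ ha hb hab
  have k2 := key _ _ hb ha (by rw [add_comm]; exact hab)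
  have e1 : δ / (u + δ - v) * v + (u - v) / (u + δ - v) * (u + δ) = u := by
    field_simp; ring
  have e2 : (u - v) / (u + δ - v) * v + δ / (u + δ - v) * (u + δ) = v + δ := by
    field_simp; ring
  rw [e1] at k1
  rw [e2] at k2
  generalize δ / (u + δ - v) = a at *
  generalize (u - v) / (u + δ - v) = b at *
  have : a * v ^ q + b * v ^ q = v ^ q := by rw [← add_mul, hab, one_mul]
  have : a * (u + δ) ^ q + b * (u + δ) ^ q = (u + δ) ^ q := by rw [← add_mul, hab, one_mul]
  linarith

lemma aux_sum {ι : Type*} [Fintype ι] [DecidableEq ι] (F : ι → ℝ → ℝ) (s : ι → ℝ) (h m : ι)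
    (hm : h ≠ m) (a b : ℝ) :
    ∑ y, F y (Function.update (Function.update s h a) m b y)
      = ∑ y, F y (s y) + (F h a - F h (s h)) + (F m b - F m (s m)) := by
  have := Fintype.sum_eq_add (f := fun y => F y (Function.update (Function.update s h a) m b y)
    - F y (s y)) h m hm (fun y hy => by simp [Function.update_of_ne, hy.1, hy.2])
  rw [Finset.sum_sub_distrib] at this
  simp [Function.update_of_ne, hm] at this
  linarith

theorem comp_bound_generalized_cross_entropy (l : ℕ) (hl : 1 ≤ l)
    (p : (Fin l → Bool) → ℝ) (hp0 : ∀ y, 0 ≤ p y) (hp1 : ∑ y, p y = 1)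
    (L : (Fin l → Bool) → (Fin l → Bool) → ℝ)
    (hL : ∀ y' y, L y' y ∈ Set.Icc (0 : ℝ) 1)
    (q : ℝ) (hq : q ∈ Set.Ioo (0 : ℝ) 1)
    (s : (Fin l → Bool) → ℝ) (hs : s ∈ probVecs l)
    (hhat : Fin l → Bool) (hmax : ∀ y', s y' ≤ s hhat) :
    condCost p L hhat - ⨅ y' : Fin l → Bool, condCost p L y'
      ≤ 2 * Real.sqrt (((2 : ℝ) ^ l) ^ q * (Ggce q (condCost p L) s
          - sInf ((fun s' => Ggce q (condCost p L) s') '' probVecs l))) := by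
  classical
  obtain ⟨hs0, hs1⟩ := hs
  have hc0 : ∀ y, 0 ≤ condCost p L y := fun y =>
    Finset.sum_nonneg fun z _ => mul_nonneg (hp0 z) (hL y z).1
  have hc1 : ∀ y, condCost p L y ≤ 1 := fun y => by
    rw [← hp1]
    exact Finset.sum_le_sum fun z _ => mul_le_of_le_one_right (hp0 z) (hL y z).2
  obtain ⟨m, hm⟩ := exists_eq_ciInf_of_finite (f := condCost p L)
  rw [← hm]
  generalize condCost p L = c at *
  clear hm
  rcases le_or_gt (c hhat - c m) 0 with hd | hd
  · exact hd.trans (by positivity)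
  have hne : hhat ≠ m := by rintro rfl; simp at hd
  obtain ⟨d, hdd⟩ : ∃ d, d = (c hhat - c m) / 2 := ⟨_, rfl⟩
  have hdpos : 0 < d := by linarith
  have hdle : d ≤ 1 / 2 := by linarith [hc0 m, hc1 hhat]
  have hu := hs0 hhat
  have hv := hs0 m
  have hq0 := hq.1
  have hδ : 0 < d * s hhat := by positivity
  have hbdd : BddBelow ((fun s' => Ggce q c s') '' probVecs l) := by
    refine ⟨0, ?_⟩
    rintro _ ⟨t, ⟨ht0, ht1⟩, rfl⟩
    refine mul_nonneg (by positivity) (Finset.sum_nonneg fun y _ => mul_nonneg ?_ ?_)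
    · linarith [hc1 y]
    · have : t y ≤ 1 := by
        rw [← ht1]
        exact Finset.single_le_sum (fun i _ => (ht0 i).le) (Finset.mem_univ y)
      linarith [Real.rpow_le_one (ht0 y).le this hq0.le]
  set t := Function.update (Function.update s hhat (s hhat - d * s hhat)) m (s m + d * s hhat)
    with ht
  have htm : t ∈ probVecs l := by
    constructor
    · intro y
      by_cases h1 : y = m
      · subst h1; simp only [ht, Function.update_self]; linarith
      · by_cases h2 : y = hhat
        · subst h2
          simp only [ht, Function.update_of_ne h1, Function.update_self]
          nlinarith
        · simp only [ht, Function.update_of_ne h1, Function.update_of_ne h2]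
          exact hs0 y
    · have := aux_sum (fun _ x => x) s hhat m hne (s hhat - d * s hhat) (s m + d * s hhat)
      rw [ht, this, hs1]; ring
  have hinf : sInf ((fun s' => Ggce q c s') '' probVecs l) ≤ Ggce q c t :=
    csInf_le hbdd ⟨t, htm, rfl⟩
  have hG : Ggce q c s - Ggce q c t = (1 / q) *
      ((1 - c hhat) * ((s hhat - d * s hhat) ^ q - s hhat ^ q)
        + (1 - c m) * ((s m + d * s hhat) ^ q - s m ^ q)) := by
    have := aux_sum (fun y x => (1 - c y) * (1 - x ^ q)) s hhat m hne
      (s hhat - d * s hhat) (s m + d * s hhat)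
    simp only [Ggce]
    rw [ht, this]; ring
  have hgain : s hhat ^ q * d ^ 2 ≤ Ggce q c s - Ggce q c t := by
    have k1 := aux_conc q (s hhat) (s m) (d * s hhat) hq hv (hmax m) hδ
    have e1 : (s hhat + d * s hhat) ^ q = s hhat ^ q * (1 + d) ^ q := by
      rw [← Real.mul_rpow hu.le (by linarith)]; ring_nf
    have e2 : (s hhat - d * s hhat) ^ q = s hhat ^ q * (1 - d) ^ q := by
      rw [← Real.mul_rpow hu.le (by linarith)]; ring_nf
    have l1 := aux_rpow q (1 + d) (by linarith)
    have l2 := aux_rpow q (1 - d) (by linarith)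
    have l3 := aux_log (1 - c m) (1 - c hhat) d (by linarith [hc0 m]) (by linarith [hc1 hhat])
      hdpos (by linarith)
    have hA : 0 ≤ 1 - c m := by linarith [hc1 m]
    have hB : 0 ≤ 1 - c hhat := by linarith [hc1 hhat]
    have hU : 0 < s hhat ^ q := Real.rpow_pos_of_pos hu q
    rw [hG, e2, one_div, inv_mul_eq_div, le_div_iff₀ hq0]
    rw [e1] at k1
    have m1 := mul_le_mul_of_nonneg_left k1 hA
    have m2 := mul_le_mul_of_nonneg_left l1 hA
    have m3 := mul_le_mul_of_nonneg_left l2 hB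
    have m4 := mul_le_mul_of_nonneg_left l3 hq0.le
    have m5 : q * d ^ 2 ≤ (1 - c m) * ((1 + d) ^ q - 1) + (1 - c hhat) * ((1 - d) ^ q - 1) := by
      linarith
    have m6 := mul_le_mul_of_nonneg_left m5 hU.le
    linarith
  have hn : 1 ≤ (2 : ℝ) ^ l * s hhat := by
    have := Finset.sum_le_card_nsmul Finset.univ s (s hhat) (fun y _ => hmax y)
    rw [hs1] at this
    simpa using this
  have hnq : 1 ≤ ((2 : ℝ) ^ l) ^ q * s hhat ^ q := by
    rw [← Real.mul_rpow (by positivity) hu.le]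
    exact Real.one_le_rpow hn hq0.le
  have hfin : d ^ 2 ≤ ((2 : ℝ) ^ l) ^ q *
      (Ggce q c s - sInf ((fun s' => Ggce q c s') '' probVecs l)) := by
    calc d ^ 2 ≤ (((2 : ℝ) ^ l) ^ q * s hhat ^ q) * d ^ 2 :=
          le_mul_of_one_le_left (sq_nonneg d) hnq
      _ = ((2 : ℝ) ^ l) ^ q * (s hhat ^ q * d ^ 2) := by ring
      _ ≤ _ := mul_le_mul_of_nonneg_left (by linarith) (by positivity)
  have := Real.le_sqrt_of_sq_le hfin
  linarith
end
end

section
/- Let l ≥ 1, Y = {−1,+1}^l with n = 2^l, p a conditional label distribution on Y, L̄ : Y × Y → [0,1] a multi-label loss, and c_{y'} = ∑_{y∈Y} p(y)·L̄(y', y). For a positive probability vector s on Y define the multi-label mean-absolute-error conditional error G_mae(s) = ∑_{y'∈Y} (1 − c_{y'})·(1 − s_{y'}). If ĥ ∈ Y satisfies s_{ĥ} = max_{y'∈Y} s_{y'}, then c_{ĥ} − min_{y'∈Y} c_{y'} ≤ n·( G_mae(s) − inf_{s'} G_mae(s') ), where the infimum is over all positive probability vectors s' on Y. -/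
noncomputable section
open Real

/-- Multi-label mean-absolute-error conditional error
`G_mae(s) = ∑_{y'} (1 − c_{y'}) (1 − s_{y'})`. -/
def Gmae {l : ℕ} (c : (Fin l → Bool) → ℝ) (s : (Fin l → Bool) → ℝ) : ℝ :=
  ∑ y', (1 - c y') * (1 - s y')

theorem comp_bound_mean_absolute_error (l : ℕ) (hl : 1 ≤ l)
    (p : (Fin l → Bool) → ℝ) (hp0 : ∀ y, 0 ≤ p y) (hp1 : ∑ y, p y = 1)
    (L : (Fin l → Bool) → (Fin l → Bool) → ℝ)
    (hL : ∀ y' y, L y' y ∈ Set.Icc (0 : ℝ) 1)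
    (s : (Fin l → Bool) → ℝ) (hs : s ∈ probVecs l)
    (hhat : Fin l → Bool) (hmax : ∀ y', s y' ≤ s hhat) :
    condCost p L hhat - ⨅ y' : Fin l → Bool, condCost p L y'
      ≤ (2 : ℝ) ^ l * (Gmae (condCost p L) s
          - sInf ((fun s' => Gmae (condCost p L) s') '' probVecs l)) := by
  obtain ⟨hs0, hs1⟩ := hs
  generalize hc : condCost p L = c
  obtain ⟨y0, hy0⟩ := Finite.exists_min c
  have hinf : (⨅ y', c y') = c y0 :=
    le_antisymm (ciInf_le (Set.finite_range c).bddBelow y0) (le_ciInf hy0)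
  rw [hinf]
  have hG : ∀ q : (Fin l → Bool) → ℝ, ∑ y', q y' = 1 →
      Gmae c q = (∑ y', (1 - c y')) - 1 + c y0 + ∑ y', (c y' - c y0) * q y' := by
    intro q hq
    have h1 : ∑ y', (c y' - c y0) * q y' = ∑ y', c y' * q y' - c y0 := by
      simp only [sub_mul, Finset.sum_sub_distrib, ← Finset.mul_sum, hq, mul_one]
    have h2 : Gmae c q = (∑ y', (1 - c y')) - ∑ y', q y' + ∑ y', c y' * q y' := by
      unfold Gmae
      rw [← Finset.sum_sub_distrib, ← Finset.sum_add_distrib]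
      exact Finset.sum_congr rfl fun y _ => by ring
    rw [h2, h1, hq]; ring
  set A := (∑ y', (1 - c y')) - 1 + c y0 with hA
  set D := ∑ y', (c y' - c y0) * s y' with hD
  have hbdd : BddBelow ((fun s' => Gmae c s') '' probVecs l) := by
    refine ⟨A, ?_⟩
    rintro _ ⟨q, ⟨hq0, hq1⟩, rfl⟩
    have h : 0 ≤ ∑ y', (c y' - c y0) * q y' :=
      Finset.sum_nonneg fun y _ => mul_nonneg (sub_nonneg.2 (hy0 y)) (hq0 y).le
    have := hG q hq1
    simp only
    linarith
  set I := sInf ((fun s' => Gmae c s') '' probVecs l) with hI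
  have hle : ∀ e : ℝ, 0 < e → e ≤ 1 → I ≤ A + e * D := by
    intro e he he1
    let q : (Fin l → Bool) → ℝ := fun y => e * s y + (if y = y0 then 1 - e else 0)
    have hq1 : ∑ y', q y' = 1 := by
      simp [q, Finset.sum_add_distrib, ← Finset.mul_sum, hs1]
    have hq0 : ∀ y', 0 < q y' := by
      intro y
      have := mul_pos he (hs0 y)
      simp only [q]
      split_ifs <;> linarith
    have h1 : I ≤ Gmae c q := csInf_le hbdd ⟨q, ⟨hq0, hq1⟩, rfl⟩
    have h2 : ∑ y', (c y' - c y0) * q y' = e * D := by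
      rw [hD, Finset.mul_sum]
      refine Finset.sum_congr rfl fun y _ => ?_
      simp only [q]
      split_ifs with h
      · subst h; ring
      · ring
    rw [hG q hq1, h2] at h1
    exact h1
  have hIA : I ≤ A := by
    by_contra hcon
    push Not at hcon
    have h1 := hle 1 one_pos le_rfl
    have hDpos : 0 < D := by linarith
    have h2 := hle ((I - A) / (2 * D)) (div_pos (by linarith) (by linarith))
      ((div_le_one (by linarith)).2 (by linarith))
    have h3 : (I - A) / (2 * D) * D = (I - A) / 2 := by field_simp
    rw [h3] at h2
    linarith
  have hDge : (c hhat - c y0) * s hhat ≤ D :=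
    Finset.single_le_sum (f := fun y => (c y - c y0) * s y)
      (fun y _ => mul_nonneg (sub_nonneg.2 (hy0 y)) (hs0 y).le) (Finset.mem_univ hhat)
  have hn : 1 ≤ (2 : ℝ) ^ l * s hhat := by
    have h := Finset.sum_le_sum (s := Finset.univ) fun y _ => hmax y
    rw [hs1] at h
    simpa using h
  have hpos : (0 : ℝ) < 2 ^ l := by positivity
  calc c hhat - c y0 ≤ (c hhat - c y0) * ((2 : ℝ) ^ l * s hhat) :=
        le_mul_of_one_le_right (sub_nonneg.2 (hy0 hhat)) hn
    _ = (2 : ℝ) ^ l * ((c hhat - c y0) * s hhat) := by ring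
    _ ≤ (2 : ℝ) ^ l * (Gmae c s - I) := by
        refine mul_le_mul_of_nonneg_left ?_ hpos.le
        rw [hG s hs1]
        linarith
end
end

section
/- Let l ≥ 1, Y = {−1,+1}^l, p a conditional label distribution on Y, L̄ : Y × Y → [0,1] a multi-label loss, c_{y'} = ∑_{y∈Y} p(y)·L̄(y', y), and L_max = max_{y',y∈Y} L̄(y', y). For a centered score vector z on Y define the multi-label constrained exponential conditional error G(z) = ∑_{y'∈Y} c_{y'}·exp(z_{y'}). If ĥ ∈ Y satisfies z_{ĥ} = max_{y'∈Y} z_{y'}, then c_{ĥ} − min_{y'∈Y} c_{y'} ≤ 2·√( L_max · ( G(z) − inf_{z'} G(z') ) ), where the infimum is over all centered score vectors z' on Y. -/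
noncomputable section
open Real

/-- The set of centered score vectors on `Y = {−1,+1}^l` (zero-sum constraint). -/
def centeredVecs (l : ℕ) : Set ((Fin l → Bool) → ℝ) :=
  {z | ∑ y', z y' = 0}

/-- Multi-label constrained exponential conditional error
`G(z) = ∑_{y'} c_{y'} exp(z_{y'})`. -/
def GcstndExp {l : ℕ} (c : (Fin l → Bool) → ℝ) (z : (Fin l → Bool) → ℝ) : ℝ :=
  ∑ y', c y' * Real.exp (z y')

theorem aux_sqrt (A B D : ℝ) (hA : 0 ≤ A) (hB : 0 ≤ B)
    (h : ∀ t : ℝ, 0 < t → A * (1 - t) + B * (1 - t⁻¹) ≤ D) :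
    √A - √B ≤ √D := by
  have hD : 0 ≤ D := by simpa using h 1 one_pos
  rcases hB.eq_or_lt with hB | hB
  · subst hB
    simp only [Real.sqrt_zero, sub_zero]
    apply Real.sqrt_le_sqrt
    by_contra hlt
    push Not at hlt
    have hA' : 0 < A := lt_of_le_of_lt hD hlt
    have h1 := h ((A - D) / (2 * A)) (div_pos (by linarith) (by linarith))
    have h2 : A * (1 - (A - D) / (2 * A)) = (A + D) / 2 := by
      field_simp
      ring
    rw [h2] at h1
    linarith
  · rcases hA.eq_or_lt with hA | hA
    · subst hA
      simp only [Real.sqrt_zero, zero_sub]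
      linarith [Real.sqrt_nonneg B, Real.sqrt_nonneg D]
    · apply Real.le_sqrt_of_sq_le
      have ha := Real.sqrt_pos.2 hA
      have hb := Real.sqrt_pos.2 hB
      have h1 := h (√B / √A) (div_pos hb ha)
      have ea := Real.sq_sqrt hA.le
      have eb := Real.sq_sqrt hB.le
      generalize √A = a at *
      generalize √B = b at *
      subst ea eb
      have h2 : a ^ 2 * (1 - b / a) + b ^ 2 * (1 - (b / a)⁻¹) = (a - b) ^ 2 := by
        field_simp
        ring
      linarith

theorem cstnd_bound_exponential (l : ℕ) (hl : 1 ≤ l)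
    (p : (Fin l → Bool) → ℝ) (hp0 : ∀ y, 0 ≤ p y) (hp1 : ∑ y, p y = 1)
    (L : (Fin l → Bool) → (Fin l → Bool) → ℝ)
    (hL : ∀ y' y, L y' y ∈ Set.Icc (0 : ℝ) 1)
    (z : (Fin l → Bool) → ℝ) (hz : z ∈ centeredVecs l)
    (hhat : Fin l → Bool) (hmax : ∀ y', z y' ≤ z hhat) :
    condCost p L hhat - ⨅ y' : Fin l → Bool, condCost p L y'
      ≤ 2 * Real.sqrt ((⨆ y' : Fin l → Bool, ⨆ y : Fin l → Bool, L y' y) *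
          (GcstndExp (condCost p L) z
            - sInf ((fun z' => GcstndExp (condCost p L) z') '' centeredVecs l))) := by
  have hc0 : ∀ y', 0 ≤ condCost p L y' := fun y' =>
    Finset.sum_nonneg fun y _ => mul_nonneg (hp0 y) (hL y' y).1
  have hcM : ∀ y', condCost p L y' ≤ ⨆ y' : Fin l → Bool, ⨆ y : Fin l → Bool, L y' y := by
    intro y'
    have hM : ∀ y, L y' y ≤ ⨆ y' : Fin l → Bool, ⨆ y : Fin l → Bool, L y' y := fun y =>
      (le_ciSup (f := fun y => L y' y) (Set.finite_range _).bddAbove y).trans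
        (le_ciSup (f := fun y' => ⨆ y, L y' y) (Set.finite_range _).bddAbove y')
    calc condCost p L y' ≤ ∑ y, p y * (⨆ y' : Fin l → Bool, ⨆ y : Fin l → Bool, L y' y) :=
          Finset.sum_le_sum fun y _ => mul_le_mul_of_nonneg_left (hM y) (hp0 y)
      _ = _ := by rw [← Finset.sum_mul, hp1, one_mul]
  obtain ⟨ys, hys⟩ := exists_eq_ciInf_of_finite (f := fun y' => condCost p L y')
  have hmin : condCost p L ys ≤ condCost p L hhat := by
    rw [hys]; exact ciInf_le (Set.finite_range _).bddBelow hhat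
  rw [← hys]
  generalize (⨆ y' : Fin l → Bool, ⨆ y : Fin l → Bool, L y' y) = M at *
  generalize condCost p L = c at *
  have hM0 : 0 ≤ M := (hc0 ys).trans (hcM ys)
  by_cases hne : ys = hhat
  · subst hne
    simp only [sub_self]
    positivity
  have hz' : ∑ y', z y' = 0 := hz
  have hu : 0 ≤ z hhat := by
    by_contra hneg
    push Not at hneg
    have : ∑ y', z y' < 0 :=
      Finset.sum_neg (fun y _ => (hmax y).trans_lt hneg) ⟨hhat, Finset.mem_univ _⟩
    linarith
  have hbdd : BddBelow ((fun z' => GcstndExp c z') '' centeredVecs l) := by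
    refine ⟨0, ?_⟩
    rintro _ ⟨w, _, rfl⟩
    exact Finset.sum_nonneg fun y _ => mul_nonneg (hc0 y) (Real.exp_pos _).le
  set D := GcstndExp c z - sInf ((fun z' => GcstndExp c z') '' centeredVecs l) with hDdef
  have key : √(c hhat * exp (z hhat)) - √(c ys * exp (z ys)) ≤ √D := by
    apply aux_sqrt _ _ _ (mul_nonneg (hc0 _) (exp_pos _).le) (mul_nonneg (hc0 _) (exp_pos _).le)
    intro t ht
    let d : (Fin l → Bool) → ℝ :=
      fun y => (if y = hhat then log t else 0) + (if y = ys then - log t else 0)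
    have hw : (fun y => z y + d y) ∈ centeredVecs l := by
      show ∑ y, (z y + d y) = 0
      simp [d, Finset.sum_add_distrib, hz']
    have h1 := csInf_le hbdd ⟨_, hw, rfl⟩
    have h2 : GcstndExp c z - GcstndExp c (fun y => z y + d y)
        = c hhat * exp (z hhat) * (1 - t) + c ys * exp (z ys) * (1 - t⁻¹) := by
      unfold GcstndExp
      rw [← Finset.sum_sub_distrib]
      have : ∀ y, c y * exp (z y) - c y * exp (z y + d y)
          = (if y = hhat then c hhat * exp (z hhat) * (1 - t) else 0)
            + (if y = ys then c ys * exp (z ys) * (1 - t⁻¹) else 0) := by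
        intro y
        by_cases e1 : y = hhat
        · subst e1
          have : y ≠ ys := fun e => hne e.symm
          simp only [d, this, if_true, if_false, add_zero, exp_add, exp_log ht]
          ring
        · by_cases e2 : y = ys
          · subst e2
            simp only [d, e1, if_true, if_false, zero_add, exp_add, exp_neg, exp_log ht]
            ring
          · simp [d, e1, e2]
      simp [this, Finset.sum_add_distrib]
    simp only at h1
    linarith
  have hs : ∀ y, √(c y * exp (z y)) = √(c y) * √(exp (z y)) := fun y =>
    Real.sqrt_mul (hc0 y) _
  rw [hs, hs] at key
  have e1 : 1 ≤ √(exp (z hhat)) := Real.one_le_sqrt.2 (Real.one_le_exp hu)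
  have e2 : √(exp (z ys)) ≤ √(exp (z hhat)) := Real.sqrt_le_sqrt (Real.exp_le_exp.2 (hmax ys))
  have hab := Real.sqrt_le_sqrt hmin
  have hb0 := Real.sqrt_nonneg (c ys)
  have k2 : √(c hhat) - √(c ys) ≤ √D := by
    nlinarith [mul_le_mul_of_nonneg_left e2 hb0,
      mul_nonneg (sub_nonneg.2 hab) (sub_nonneg.2 e1)]
  rw [Real.sqrt_mul hM0]
  have ha := Real.sqrt_le_sqrt (hcM hhat)
  have hb := Real.sqrt_le_sqrt (hcM ys)
  have hfac : c hhat - c ys = (√(c hhat) + √(c ys)) * (√(c hhat) - √(c ys)) := by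
    nlinarith [Real.sq_sqrt (hc0 hhat), Real.sq_sqrt (hc0 ys)]
  calc c hhat - c ys = (√(c hhat) + √(c ys)) * (√(c hhat) - √(c ys)) := hfac
    _ ≤ (2 * √M) * √D :=
        mul_le_mul (by linarith) k2 (sub_nonneg.2 hab) (by positivity)
    _ = _ := by ring
end
end

section
/- Let l ≥ 1, Y = {−1,+1}^l, p a conditional label distribution on Y, L̄ : Y × Y → [0,1] a multi-label loss, and c_{y'} = ∑_{y∈Y} p(y)·L̄(y', y). For a centered score vector z on Y define the multi-label constrained squared-hinge conditional error G(z) = ∑_{y'∈Y} c_{y'}·(max(0, 1 + z_{y'}))². If ĥ ∈ Y satisfies z_{ĥ} = max_{y'∈Y} z_{y'}, then c_{ĥ} − min_{y'∈Y} c_{y'} ≤ 2·√( G(z) − inf_{z'} G(z') ), where the infimum is over all centered score vectors z' on Y. -/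
noncomputable section
open Real

/-- Multi-label constrained squared-hinge conditional error
`G(z) = ∑_{y'} c_{y'} (max(0, 1 + z_{y'}))²`. -/
def GcstndSqHinge {l : ℕ} (c : (Fin l → Bool) → ℝ) (z : (Fin l → Bool) → ℝ) : ℝ :=
  ∑ y', c y' * max 0 (1 + z y') ^ 2

theorem cstnd_bound_squared_hinge (l : ℕ) (hl : 1 ≤ l)
    (p : (Fin l → Bool) → ℝ) (hp0 : ∀ y, 0 ≤ p y) (hp1 : ∑ y, p y = 1)
    (L : (Fin l → Bool) → (Fin l → Bool) → ℝ)
    (hL : ∀ y' y, L y' y ∈ Set.Icc (0 : ℝ) 1)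
    (z : (Fin l → Bool) → ℝ) (hz : z ∈ centeredVecs l)
    (hhat : Fin l → Bool) (hmax : ∀ y', z y' ≤ z hhat) :
    condCost p L hhat - ⨅ y' : Fin l → Bool, condCost p L y'
      ≤ 2 * Real.sqrt (GcstndSqHinge (condCost p L) z
          - sInf ((fun z' => GcstndSqHinge (condCost p L) z') '' centeredVecs l)) := by
  have hc0 : ∀ y, 0 ≤ condCost p L y := fun y =>
    Finset.sum_nonneg fun x _ => mul_nonneg (hp0 x) (hL y x).1
  have hc1 : ∀ y, condCost p L y ≤ 1 := by
    intro y
    rw [← hp1]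
    exact Finset.sum_le_sum fun x _ => mul_le_of_le_one_right (hp0 x) (hL y x).2
  obtain ⟨m, hm⟩ := exists_eq_ciInf_of_finite (f := fun y' => condCost p L y')
  have hle : condCost p L m ≤ condCost p L hhat := by
    have := ciInf_le (Set.finite_range (fun y' => condCost p L y')).bddBelow hhat
    rw [← hm] at this
    exact this
  rw [← hm]
  show condCost p L hhat - condCost p L m ≤ _
  generalize condCost p L = c at *
  by_cases hne : hhat = m
  · subst hne
    rw [sub_self]
    positivity
  have hz0 : ∑ y', z y' = 0 := hz
  have hM : 0 ≤ z hhat := by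
    by_contra hneg
    have : ∑ y', z y' < 0 :=
      Finset.sum_neg (fun y _ => lt_of_le_of_lt (hmax y) (not_le.mp hneg)) ⟨hhat, Finset.mem_univ _⟩
    linarith
  set t : ℝ := (c hhat - c m) / 2 with ht
  let z' : (Fin l → Bool) → ℝ := fun y =>
    z y - (if y = hhat then t else 0) + (if y = m then t else 0)
  have hz' : z' ∈ centeredVecs l := by
    show ∑ y, z' y = 0
    simp [z', Finset.sum_add_distrib, Finset.sum_sub_distrib, hz0]
  have hbdd : BddBelow ((fun z' => GcstndSqHinge c z') '' centeredVecs l) := by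
    refine ⟨0, ?_⟩
    rintro _ ⟨w, _, rfl⟩
    exact Finset.sum_nonneg fun y _ => mul_nonneg (hc0 y) (sq_nonneg _)
  have hinf := csInf_le hbdd ⟨z', hz', rfl⟩
  have hdiff : GcstndSqHinge c z - GcstndSqHinge c z'
      = c hhat * (max 0 (1 + z hhat) ^ 2 - max 0 (1 + z hhat - t) ^ 2)
        + c m * (max 0 (1 + z m) ^ 2 - max 0 (1 + z m + t) ^ 2) := by
    unfold GcstndSqHinge
    rw [← Finset.sum_sub_distrib]
    have : ∀ y, c y * max 0 (1 + z y) ^ 2 - c y * max 0 (1 + z' y) ^ 2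
        = (if y = hhat then
            c hhat * (max 0 (1 + z hhat) ^ 2 - max 0 (1 + z hhat - t) ^ 2) else 0)
          + (if y = m then
            c m * (max 0 (1 + z m) ^ 2 - max 0 (1 + z m + t) ^ 2) else 0) := by
      intro y
      by_cases h1 : y = hhat
      · subst h1
        simp only [z', if_true, if_neg hne, add_zero, ← add_sub_assoc]
        ring
      · by_cases h2 : y = m
        · subst h2
          simp only [z', if_true, if_neg h1, sub_zero, ← add_assoc]
          ring
        · simp [z', h1, h2]
    rw [Finset.sum_congr rfl fun y _ => this y, Finset.sum_add_distrib]
    simp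
  have ha1 := hc1 hhat
  have hb0 := hc0 m
  have hmm := hmax m
  have ht0 : 0 ≤ t := by rw [ht]; linarith
  have ht1 : t ≤ 1 / 2 := by rw [ht]; linarith
  have hB : max 0 (1 + z m + t) ^ 2 - max 0 (1 + z m) ^ 2
      ≤ 2 * t * (1 + z hhat) + t ^ 2 := by
    rcases le_total 0 (1 + z m) with h | h
    · rw [max_eq_right h, max_eq_right (by linarith)]
      nlinarith
    · rw [max_eq_left h]
      rcases le_total 0 (1 + z m + t) with h' | h'
      · rw [max_eq_right h']
        nlinarith
      · rw [max_eq_left h']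
        nlinarith [mul_nonneg ht0 hM]
  rw [max_eq_right (by linarith : 0 ≤ 1 + z hhat),
    max_eq_right (by linarith : 0 ≤ 1 + z hhat - t)] at hdiff
  have hB' := mul_le_mul_of_nonneg_left hB hb0
  have hca : c hhat = c m + 2 * t := by rw [ht]; ring
  have key : t ^ 2 ≤ GcstndSqHinge c z - GcstndSqHinge c z' := by
    have h1 : 4 * t ^ 2 * (1 + z hhat) - (c hhat + c m) * t ^ 2
        ≤ GcstndSqHinge c z - GcstndSqHinge c z' := by
      rw [hdiff]
      rw [hca] at *
      nlinarith
    have h2 : 0 ≤ t ^ 2 * z hhat := mul_nonneg (sq_nonneg _) hM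
    have h3 : (c hhat + c m) * t ^ 2 ≤ 2 * t ^ 2 :=
      mul_le_mul_of_nonneg_right (by linarith) (sq_nonneg _)
    nlinarith [sq_nonneg t]
  have hs : t ≤ Real.sqrt (GcstndSqHinge c z
      - sInf ((fun z' => GcstndSqHinge c z') '' centeredVecs l)) := by
    apply Real.le_sqrt_of_sq_le
    have : sInf ((fun z' => GcstndSqHinge c z') '' centeredVecs l) ≤ GcstndSqHinge c z' := hinf
    linarith
  linarith
end
end

section
/- Let l ≥ 1, Y = {−1,+1}^l, p a conditional label distribution on Y, L̄ : Y × Y → [0,1] a multi-label loss, and c_{y'} = ∑_{y∈Y} p(y)·L̄(y', y). For a centered score vector z on Y define the multi-label constrained hinge conditional error G(z) = ∑_{y'∈Y} c_{y'}·max(0, 1 + z_{y'}). If ĥ ∈ Y satisfies z_{ĥ} = max_{y'∈Y} z_{y'}, then c_{ĥ} − min_{y'∈Y} c_{y'} ≤ G(z) − inf_{z'} G(z'), where the infimum is over all centered score vectors z' on Y. -/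
noncomputable section
open Real

/-- Multi-label constrained hinge conditional error
`G(z) = ∑_{y'} c_{y'} max(0, 1 + z_{y'})`. -/
def GcstndHinge {l : ℕ} (c : (Fin l → Bool) → ℝ) (z : (Fin l → Bool) → ℝ) : ℝ :=
  ∑ y', c y' * max 0 (1 + z y')

theorem cstnd_bound_hinge (l : ℕ) (hl : 1 ≤ l)
    (p : (Fin l → Bool) → ℝ) (hp0 : ∀ y, 0 ≤ p y) (hp1 : ∑ y, p y = 1)
    (L : (Fin l → Bool) → (Fin l → Bool) → ℝ)
    (hL : ∀ y' y, L y' y ∈ Set.Icc (0 : ℝ) 1)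
    (z : (Fin l → Bool) → ℝ) (hz : z ∈ centeredVecs l)
    (hhat : Fin l → Bool) (hmax : ∀ y', z y' ≤ z hhat) :
    condCost p L hhat - ⨅ y' : Fin l → Bool, condCost p L y'
      ≤ GcstndHinge (condCost p L) z
          - sInf ((fun z' => GcstndHinge (condCost p L) z') '' centeredVecs l) := by
  have hc : ∀ y', 0 ≤ condCost p L y' := fun y' =>
    Finset.sum_nonneg fun y _ => mul_nonneg (hp0 y) (hL y' y).1
  obtain ⟨m, hm⟩ := Finite.exists_min (condCost p L)
  generalize condCost p L = c at *
  have hinf : ⨅ y', c y' = c m :=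
    le_antisymm (ciInf_le (Set.finite_range c).bddBelow m) (le_ciInf hm)
  have hz0 : ∑ y', z y' = 0 := hz
  have hzh : 0 ≤ z hhat := by
    by_contra hneg
    push Not at hneg
    have : ∑ y', z y' < ∑ y' : Fin l → Bool, (0 : ℝ) :=
      Finset.sum_lt_sum_of_nonempty Finset.univ_nonempty
        (fun y _ => lt_of_le_of_lt (hmax y) hneg)
    simp [hz0] at this
  set n : ℝ := ∑ _y : Fin l → Bool, (1 : ℝ) with hn
  have hn0 : 0 ≤ n := Finset.sum_nonneg fun _ _ => zero_le_one
  have hsInf : sInf ((fun z' => GcstndHinge c z') '' centeredVecs l) ≤ n * c m := by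
    apply csInf_le
    · refine ⟨0, ?_⟩
      rintro _ ⟨z', _, rfl⟩
      exact Finset.sum_nonneg fun y _ => mul_nonneg (hc y) (le_max_left _ _)
    · refine ⟨fun y => (if y = m then n else 0) - 1, ?_, ?_⟩
      · change ∑ y, ((if y = m then n else 0) - 1) = 0
        rw [Finset.sum_sub_distrib, ← hn]
        simp
      · change ∑ y, c y * max 0 (1 + ((if y = m then n else 0) - 1)) = n * c m
        rw [Finset.sum_eq_single m]
        · simp [max_eq_right hn0, mul_comm]
        · intro y _ hy
          simp [hy]
        · simp
  have h1 : c hhat - c m ≤ ∑ y, (c y - c m) * max 0 (1 + z y) := by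
    refine le_trans ?_ (Finset.single_le_sum
      (f := fun y => (c y - c m) * max 0 (1 + z y))
      (fun y _ => mul_nonneg (sub_nonneg.2 (hm y)) (le_max_left _ _))
      (Finset.mem_univ hhat))
    have : 1 ≤ max 0 (1 + z hhat) := le_max_of_le_right (by linarith)
    exact le_mul_of_one_le_right (sub_nonneg.2 (hm hhat)) this
  have h2 : n ≤ ∑ y, max 0 (1 + z y) := by
    calc n = ∑ y, (1 + z y) := by rw [Finset.sum_add_distrib, hz0, add_zero]
      _ ≤ _ := Finset.sum_le_sum fun y _ => le_max_right _ _
  have h3 : ∑ y, (c y - c m) * max 0 (1 + z y)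
      = GcstndHinge c z - c m * ∑ y, max 0 (1 + z y) := by
    simp only [GcstndHinge, sub_mul, Finset.sum_sub_distrib, Finset.mul_sum]
  have h4 := mul_le_mul_of_nonneg_left h2 (hc m)
  rw [hinf]
  linarith
end
end

section
/- Let l ≥ 1, Y = {−1,+1}^l, p a conditional label distribution on Y, L̄ : Y × Y → [0,1] a multi-label loss, c_{y'} = ∑_{y∈Y} p(y)·L̄(y', y), and ρ > 0. For a centered score vector z on Y define the multi-label constrained ρ-margin conditional error G(z) = ∑_{y'∈Y} c_{y'}·min( max(0, 1 + z_{y'}/ρ), 1 ). If ĥ ∈ Y satisfies z_{ĥ} = max_{y'∈Y} z_{y'}, then c_{ĥ} − min_{y'∈Y} c_{y'} ≤ G(z) − inf_{z'} G(z'), where the infimum is over all centered score vectors z' on Y. -/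
noncomputable section
open Real

/-- Multi-label constrained ρ-margin conditional error
`G(z) = ∑_{y'} c_{y'} min(max(0, 1 + z_{y'}/ρ), 1)`. -/
def GcstndMargin {l : ℕ} (ρ : ℝ) (c : (Fin l → Bool) → ℝ) (z : (Fin l → Bool) → ℝ) : ℝ :=
  ∑ y', c y' * min (max 0 (1 + z y' / ρ)) 1

theorem cstnd_bound_rho_margin (l : ℕ) (hl : 1 ≤ l)
    (p : (Fin l → Bool) → ℝ) (hp0 : ∀ y, 0 ≤ p y) (hp1 : ∑ y, p y = 1)
    (L : (Fin l → Bool) → (Fin l → Bool) → ℝ)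
    (hL : ∀ y' y, L y' y ∈ Set.Icc (0 : ℝ) 1)
    (ρ : ℝ) (hρ : 0 < ρ)
    (z : (Fin l → Bool) → ℝ) (hz : z ∈ centeredVecs l)
    (hhat : Fin l → Bool) (hmax : ∀ y', z y' ≤ z hhat) :
    condCost p L hhat - ⨅ y' : Fin l → Bool, condCost p L y'
      ≤ GcstndMargin ρ (condCost p L) z
          - sInf ((fun z' => GcstndMargin ρ (condCost p L) z') '' centeredVecs l) := by
  have hc : ∀ y', 0 ≤ condCost p L y' := fun y' =>
    Finset.sum_nonneg fun y _ => mul_nonneg (hp0 y) (hL y' y).1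
  have hterm : ∀ (w : (Fin l → Bool) → ℝ) (y' : Fin l → Bool),
      0 ≤ condCost p L y' * min (max 0 (1 + w y' / ρ)) 1 := fun w y' =>
    mul_nonneg (hc y') (le_min (le_max_left _ _) zero_le_one)
  have hz0 : ∑ y', z y' = 0 := hz
  have hzh : 0 ≤ z hhat := by
    by_contra hneg
    push Not at hneg
    have : ∑ y', z y' < 0 :=
      Finset.sum_neg (fun y' _ => lt_of_le_of_lt (hmax y') hneg) ⟨hhat, Finset.mem_univ _⟩
    linarith
  have h1 : condCost p L hhat ≤ GcstndMargin ρ (condCost p L) z := by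
    have hone : min (max 0 (1 + z hhat / ρ)) 1 = 1 := by
      have : 0 ≤ z hhat / ρ := div_nonneg hzh hρ.le
      exact min_eq_right (le_max_of_le_right (by linarith))
    have h := Finset.single_le_sum (f := fun y' =>
      condCost p L y' * min (max 0 (1 + z y' / ρ)) 1)
      (fun y' _ => hterm z y') (Finset.mem_univ hhat)
    simp only [hone, mul_one] at h
    exact h
  have h2 : sInf ((fun z' => GcstndMargin ρ (condCost p L) z') '' centeredVecs l)
      ≤ ⨅ y' : Fin l → Bool, condCost p L y' := by
    refine le_ciInf fun m => ?_
    have hbdd : BddBelow ((fun z' => GcstndMargin ρ (condCost p L) z') '' centeredVecs l) := by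
      refine ⟨0, ?_⟩
      rintro _ ⟨w, _, rfl⟩
      exact Finset.sum_nonneg fun y' _ => hterm w y'
    let w : (Fin l → Bool) → ℝ := fun y' =>
      (if y' = m then (Fintype.card (Fin l → Bool) : ℝ) * ρ else 0) - ρ
    have hw : w ∈ centeredVecs l := by
      change ∑ y', w y' = 0
      simp [w, Finset.sum_sub_distrib]
    refine (csInf_le hbdd ⟨w, hw, rfl⟩).trans ?_
    change ∑ y', condCost p L y' * min (max 0 (1 + w y' / ρ)) 1 ≤ _
    rw [Finset.sum_eq_single m]
    · exact mul_le_of_le_one_right (hc m) (min_le_right _ _)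
    · intro b _ hb
      have : 1 + w b / ρ = 0 := by
        simp only [w, if_neg hb]
        field_simp
        ring
      simp [this]
    · simp
  linarith
end
end

section
/- Fix integers d ≥ 1, l ≥ 1, feature vectors ψ_1, …, ψ_l ∈ ℝ^d, a label ȳ ∈ Y = {−1,+1}^l, and a function L̄ : Y × Y → ℝ. Define F : ℝ^d → ℝ by F(w) = ∑_{y'∈Y} (1 − L̄(y', ȳ)) · log( ∑_{y''∈Y} exp( ∑_{i=1}^{l} (y''_i − y'_i)·⟨w, ψ_i⟩ ) ). Then F is differentiable on ℝ^d and its gradient at every w ∈ ℝ^d is ∇F(w) = −∑_{i=1}^{l} L2(i)·ψ_i + L1·∑_{i=1}^{l} Q_w(i)·ψ_i, where L1 = ∑_{y∈Y} (1 − L̄(y, ȳ)), L2(i) = ∑_{y∈Y} (1 − L̄(y, ȳ))·y_i, Q_w(i) = ∑_{y∈Y} q_w(y)·y_i, q_w(y) = exp(⟨w, ψ̃(y)⟩) / ∑_{y'∈Y} exp(⟨w, ψ̃(y')⟩), and ψ̃(y) = ∑_{i=1}^{l} y_i·ψ_i. -/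
noncomputable section
open Real RealInnerProductSpace

/-- The aggregated feature vector `ψ̃(y) = ∑_i y_i ψ_i`. -/
def psiTilde {d l : ℕ} (ψ : Fin l → EuclideanSpace ℝ (Fin d)) (y : Fin l → Bool) :
    EuclideanSpace ℝ (Fin d) :=
  ∑ i, signVal (y i) • ψ i

/-- The Gibbs distribution `q_w(y) = exp⟪w, ψ̃(y)⟫ / ∑_{y'} exp⟪w, ψ̃(y')⟫`. -/
def gibbs {d l : ℕ} (ψ : Fin l → EuclideanSpace ℝ (Fin d))
    (w : EuclideanSpace ℝ (Fin d)) (y : Fin l → Bool) : ℝ :=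
  Real.exp ⟪w, psiTilde ψ y⟫ / ∑ y' : Fin l → Bool, Real.exp ⟪w, psiTilde ψ y'⟫

/-- The multi-label logistic loss of the linear hypothesis `h(x,i) = ⟪w, ψ_i⟫` at a fixed
labeled example with features `ψ_i` and label `ȳ`. -/
def mlLogLoss {d l : ℕ} (ψ : Fin l → EuclideanSpace ℝ (Fin d))
    (ybar : Fin l → Bool) (L : (Fin l → Bool) → (Fin l → Bool) → ℝ)
    (w : EuclideanSpace ℝ (Fin d)) : ℝ :=
  ∑ y' : Fin l → Bool, (1 - L y' ybar) *
    Real.log (∑ y'' : Fin l → Bool,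
      Real.exp (∑ i, (signVal (y'' i) - signVal (y' i)) * ⟪w, ψ i⟫))

lemma mlLogLoss_eq {d l : ℕ} (ψ : Fin l → EuclideanSpace ℝ (Fin d))
    (ybar : Fin l → Bool) (L : (Fin l → Bool) → (Fin l → Bool) → ℝ) :
    mlLogLoss ψ ybar L = fun w => ∑ y' : Fin l → Bool, (1 - L y' ybar) *
      (Real.log (∑ y : Fin l → Bool, Real.exp (innerSL ℝ (psiTilde ψ y) w))
        - innerSL ℝ (psiTilde ψ y') w) := by
  funext w
  unfold mlLogLoss
  refine Finset.sum_congr rfl fun y' _ => ?_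
  congr 1
  have hpos : 0 < ∑ y : Fin l → Bool, Real.exp (innerSL ℝ (psiTilde ψ y) w) :=
    Finset.sum_pos (fun _ _ => Real.exp_pos _) Finset.univ_nonempty
  have key : ∀ y : Fin l → Bool, innerSL ℝ (psiTilde ψ y) w
      = ∑ i, signVal (y i) * ⟪w, ψ i⟫ := by
    intro y
    rw [innerSL_apply_apply, real_inner_comm, psiTilde, inner_sum]
    simp [real_inner_smul_right]
  rw [← Real.log_exp (innerSL ℝ (psiTilde ψ y') w),
    ← Real.log_div hpos.ne' (Real.exp_pos _).ne', Finset.sum_div]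
  congr 1
  refine Finset.sum_congr rfl fun y _ => ?_
  rw [← Real.exp_sub, key, key, ← Finset.sum_sub_distrib]
  simp only [sub_mul]

lemma hasGradientAt_mlLogLoss {d l : ℕ} (ψ : Fin l → EuclideanSpace ℝ (Fin d))
    (ybar : Fin l → Bool) (L : (Fin l → Bool) → (Fin l → Bool) → ℝ)
    (w : EuclideanSpace ℝ (Fin d)) :
    HasGradientAt (mlLogLoss ψ ybar L)
        (-(∑ i, (∑ y : Fin l → Bool, (1 - L y ybar) * signVal (y i)) • ψ i)
          + (∑ y : Fin l → Bool, (1 - L y ybar)) •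
            ∑ i, (∑ y : Fin l → Bool, gibbs ψ w y * signVal (y i)) • ψ i)
        w := by
  have swap : ∀ c : (Fin l → Bool) → ℝ,
      ∑ i, (∑ y : Fin l → Bool, c y * signVal (y i)) • ψ i = ∑ y, c y • psiTilde ψ y := by
    intro c
    simp only [psiTilde, Finset.smul_sum, Finset.sum_smul, smul_smul]
    exact Finset.sum_comm
  rw [swap (fun y => 1 - L y ybar), swap, hasGradientAt_iff_hasFDerivAt, mlLogLoss_eq]
  have hpos : 0 < ∑ y : Fin l → Bool, Real.exp (innerSL ℝ (psiTilde ψ y) w) :=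
    Finset.sum_pos (fun _ _ => Real.exp_pos _) Finset.univ_nonempty
  have hZ : HasFDerivAt
      (fun w => ∑ y : Fin l → Bool, Real.exp (innerSL ℝ (psiTilde ψ y) w))
      (∑ y : Fin l → Bool, Real.exp (innerSL ℝ (psiTilde ψ y) w) • innerSL ℝ (psiTilde ψ y)) w :=
    HasFDerivAt.fun_sum fun y _ => (innerSL ℝ (psiTilde ψ y)).hasFDerivAt.exp
  have hF := HasFDerivAt.fun_sum (u := (Finset.univ : Finset (Fin l → Bool))) fun y' _ =>
    ((hZ.log hpos.ne').sub (innerSL ℝ (psiTilde ψ y')).hasFDerivAt).const_mul (1 - L y' ybar)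
  refine hF.congr_fderiv ?_
  have hg : ∀ y, gibbs ψ w y = (∑ y : Fin l → Bool, Real.exp (innerSL ℝ (psiTilde ψ y) w))⁻¹
      * Real.exp (innerSL ℝ (psiTilde ψ y) w) := by
    intro y
    simp only [gibbs, innerSL_apply_apply, real_inner_comm w]
    rw [div_eq_inv_mul]
  simp only [hg]
  generalize (∑ y : Fin l → Bool, Real.exp (innerSL ℝ (psiTilde ψ y) w))⁻¹ = c
  ext v
  simp only [map_add, map_neg, map_sum, map_smul, smul_sub, Finset.sum_sub_distrib,
    ← Finset.sum_smul, mul_smul, ← Finset.smul_sum]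
  simp [InnerProductSpace.toDual_apply_apply, Finset.mul_sum]
  ring

theorem gradient_multilabel_logistic (d l : ℕ) (hd : 1 ≤ d) (hl : 1 ≤ l)
    (ψ : Fin l → EuclideanSpace ℝ (Fin d)) (ybar : Fin l → Bool)
    (L : (Fin l → Bool) → (Fin l → Bool) → ℝ) :
    Differentiable ℝ (mlLogLoss ψ ybar L) ∧
    ∀ w : EuclideanSpace ℝ (Fin d),
      HasGradientAt (mlLogLoss ψ ybar L)
        (-(∑ i, (∑ y : Fin l → Bool, (1 - L y ybar) * signVal (y i)) • ψ i)
          + (∑ y : Fin l → Bool, (1 - L y ybar)) •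
            ∑ i, (∑ y : Fin l → Bool, gibbs ψ w y * signVal (y i)) • ψ i)
        w := by
  exact ⟨fun w => (hasGradientAt_mlLogLoss ψ ybar L w).hasFDerivAt.differentiableAt,
    hasGradientAt_mlLogLoss ψ ybar L⟩
end
end

section
/- For all real numbers a, b ∈ [0,1] with a + b ≤ 1 and every q ∈ (0,1): ( (a^{1/(1−q)} + b^{1/(1−q)}) / 2 )^{1−q} − (a + b)/2 ≥ (q/4)·(a − b)². -/
noncomputable section
open Real

lemma aux_ent0 (x : ℝ) (h0 : 0 ≤ x) (h1 : x ≤ 1) :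
    x ^ 2 ≤ (1 + x) * log (1 + x) + (1 - x) * log (1 - x) := by
  have hmono : MonotoneOn
      (fun x : ℝ => (1 + x) * log (1 + x) + (1 - x) * log (1 - x) - x ^ 2) (Set.Icc 0 1) := by
    apply monotoneOn_of_hasDerivWithinAt_nonneg (convex_Icc 0 1)
      (f' := fun x => log (1 + x) - log (1 - x) - 2 * x)
    · have c1 : Continuous fun x : ℝ => (1 + x) * log (1 + x) :=
        Real.continuous_mul_log.comp (continuous_const.add continuous_id)
      have c2 : Continuous fun x : ℝ => (1 - x) * log (1 - x) :=
        Real.continuous_mul_log.comp (continuous_const.sub continuous_id)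
      exact ((c1.add c2).sub (continuous_pow 2)).continuousOn
    · intro y hy
      rw [interior_Icc] at hy
      have p1 : (1 + y) ≠ 0 := by have := hy.1; positivity
      have p2 : (1 - y) ≠ 0 := by have := hy.2; linarith
      have d1 : HasDerivAt (fun x : ℝ => 1 + x) 1 y := (hasDerivAt_id y).const_add 1
      have d2 : HasDerivAt (fun x : ℝ => 1 - x) (-1) y := (hasDerivAt_id y).const_sub 1
      have d := ((d1.mul (d1.log p1)).add (d2.mul (d2.log p2))).sub (hasDerivAt_pow 2 y)
      refine (d.congr_deriv ?_).hasDerivWithinAt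
      field_simp
      ring
    · intro y hy
      rw [interior_Icc] at hy
      have hs := Real.hasSum_log_sub_log_of_abs_lt_one
        (x := y) (by rw [abs_of_pos hy.1]; exact hy.2)
      have := hs.summable.le_tsum 0 (fun j _ => by have := hy.1; positivity)
      rw [hs.tsum_eq] at this
      norm_num at this
      show 0 ≤ log (1 + y) - log (1 - y) - 2 * y
      linarith
  have := hmono (Set.left_mem_Icc.2 zero_le_one) ⟨h0, h1⟩ h0
  norm_num at this
  linarith

lemma aux_ent (x : ℝ) (h0 : -1 ≤ x) (h1 : x ≤ 1) :
    x ^ 2 ≤ (1 + x) * log (1 + x) + (1 - x) * log (1 - x) := by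
  rcases le_total 0 x with h | h
  · exact aux_ent0 x h h1
  · have := aux_ent0 (-x) (by linarith) (by linarith)
    rw [neg_sq, sub_neg_eq_add, ← sub_eq_add_neg] at this
    linarith

lemma aux_term (a A q : ℝ) (ha : 0 ≤ a) (hA : 0 < a → 0 < A) :
    a * (1 + q * log A) ≤ a * A ^ q := by
  rcases ha.eq_or_lt with h | h
  · simp [← h]
  · apply mul_le_mul_of_nonneg_left _ ha
    rw [Real.rpow_def_of_pos (hA h)]
    have := Real.add_one_le_exp (log A * q)
    linarith

theorem power_mean_inequality (a b q : ℝ) (ha : a ∈ Set.Icc (0 : ℝ) 1)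
    (hb : b ∈ Set.Icc (0 : ℝ) 1) (hab : a + b ≤ 1) (hq : q ∈ Set.Ioo (0 : ℝ) 1) :
    ((a ^ (1 / (1 - q)) + b ^ (1 / (1 - q))) / 2) ^ (1 - q) - (a + b) / 2
      ≥ (q / 4) * (a - b) ^ 2 := by
  obtain ⟨ha0, -⟩ := ha
  obtain ⟨hb0, -⟩ := hb
  obtain ⟨hq0, hq1⟩ := hq
  have hq' : 0 < 1 - q := by linarith
  rcases (add_nonneg ha0 hb0).eq_or_lt with hS | hS
  · have h1 : a = 0 := by linarith
    have h2 : b = 0 := by linarith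
    subst h1 h2
    have : (1 - q)⁻¹ ≠ 0 := by positivity
    simp [Real.zero_rpow this, Real.zero_rpow hq'.ne']
  set S := a + b with hSdef
  set A := 2 * a / S with hA
  set B := 2 * b / S with hB
  have hA0 : 0 ≤ A := by positivity
  have hB0 : 0 ≤ B := by positivity
  have hAB : A + B = 2 := by
    rw [hA, hB]; field_simp; rw [hSdef]
  have hol := Real.inner_le_Lp_mul_Lq_of_nonneg (Finset.univ : Finset (Fin 2))
    (p := 1 / (1 - q)) (q := 1 / q) (f := ![a, b]) (g := ![A ^ q, B ^ q])
    (by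
      rw [Real.holderConjugate_iff]
      refine ⟨?_, ?_⟩
      · rw [lt_div_iff₀ hq']; linarith
      · simp)
    (by intro i _; fin_cases i <;> simp [ha0, hb0])
    (by intro i _; fin_cases i <;> simp <;> positivity)
  simp only [Fin.sum_univ_two, Matrix.cons_val_zero, Matrix.cons_val_one, one_div_one_div] at hol
  rw [← Real.rpow_mul hA0, ← Real.rpow_mul hB0, mul_one_div_cancel hq0.ne', Real.rpow_one,
    Real.rpow_one, hAB] at hol
  have hP : 0 ≤ a ^ (1 / (1 - q)) + b ^ (1 / (1 - q)) := by positivity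
  have hdiv : ((a ^ (1 / (1 - q)) + b ^ (1 / (1 - q))) / 2) ^ (1 - q)
      = (a ^ (1 / (1 - q)) + b ^ (1 / (1 - q))) ^ (1 - q) * 2 ^ q / 2 := by
    rw [Real.div_rpow hP (by norm_num), Real.rpow_sub (x := 2) (by norm_num), Real.rpow_one, div_div_eq_mul_div]
  have t1 := aux_term a A q ha0 (fun h => by positivity)
  have t2 := aux_term b B q hb0 (fun h => by positivity)
  have e := aux_ent (A - 1) (by linarith) (by linarith)
  rw [show 1 + (A - 1) = A by ring, show 1 - (A - 1) = B by linarith] at e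
  have hAS : A * S = 2 * a := by rw [hA]; field_simp
  have hBS : B * S = 2 * b := by rw [hB]; field_simp
  have hx : (A - 1) * S = a - b := by rw [sub_mul, hAS]; linarith
  have key : (a - b) ^ 2 / 2 ≤ a * log A + b * log B := by
    have h1 := mul_le_mul_of_nonneg_left e hS.le
    have h2 : S * (A * log A + B * log B) = 2 * (a * log A + b * log B) := by
      linear_combination log A * hAS + log B * hBS
    have h3 : (a - b) ^ 2 ≤ S * (A - 1) ^ 2 := by
      rw [← hx]
      nlinarith [mul_nonneg (mul_nonneg hS.le (sub_nonneg.2 hab)) (sq_nonneg (A - 1))]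
    linarith
  have key' := mul_le_mul_of_nonneg_left key hq0.le
  rw [hdiv]
  linarith
end
end

section
/- Let α, β, s, t be real numbers with α > 0, β > 0, s > 0, t > 0. Then the supremum over μ ∈ (−s, t) of the function μ ↦ α·(log(t − μ) − log s) + β·(log(s + μ) − log t) equals β·log( (s+t)·β / (t·(α+β)) ) + α·log( (s+t)·α / (s·(α+β)) ), and it is attained at μ* = (β·t − α·s)/(α + β). -/
noncomputable section
open Real

theorem log_transfer_optimization (α β s t : ℝ)
    (hα : 0 < α) (hβ : 0 < β) (hs : 0 < s) (ht : 0 < t) :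
    (β * t - α * s) / (α + β) ∈ Set.Ioo (-s) t
    ∧ (α * (Real.log (t - (β * t - α * s) / (α + β)) - Real.log s)
        + β * (Real.log (s + (β * t - α * s) / (α + β)) - Real.log t))
      = β * Real.log ((s + t) * β / (t * (α + β)))
        + α * Real.log ((s + t) * α / (s * (α + β)))
    ∧ ∀ μ ∈ Set.Ioo (-s) t,
        α * (Real.log (t - μ) - Real.log s) + β * (Real.log (s + μ) - Real.log t)
          ≤ β * Real.log ((s + t) * β / (t * (α + β)))
            + α * Real.log ((s + t) * α / (s * (α + β))) := by
  have hab : 0 < α + β := by positivity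
  have hst : 0 < s + t := by positivity
  have eA : t - (β * t - α * s) / (α + β) = (s + t) * α / (α + β) := by
    field_simp
    ring
  have eB : s + (β * t - α * s) / (α + β) = (s + t) * β / (α + β) := by
    field_simp
    ring
  have hA : 0 < (s + t) * α / (α + β) := by positivity
  have hB : 0 < (s + t) * β / (α + β) := by positivity
  have lA : Real.log ((s + t) * α / (s * (α + β)))
      = Real.log ((s + t) * α / (α + β)) - Real.log s := by
    rw [← Real.log_div hA.ne' hs.ne']
    congr 1
    field_simp
  have lB : Real.log ((s + t) * β / (t * (α + β)))
      = Real.log ((s + t) * β / (α + β)) - Real.log t := by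
    rw [← Real.log_div hB.ne' ht.ne']
    congr 1
    field_simp
  refine ⟨⟨by linarith, by linarith⟩, ?_, ?_⟩
  · rw [eA, eB, lA, lB]
    ring
  · rintro μ ⟨h1, h2⟩
    rw [lA, lB]
    have hx : 0 < t - μ := by linarith
    have hy : 0 < s + μ := by linarith
    have k1 := Real.log_le_sub_one_of_pos (div_pos hx hA)
    have k2 := Real.log_le_sub_one_of_pos (div_pos hy hB)
    rw [Real.log_div hx.ne' hA.ne'] at k1
    rw [Real.log_div hy.ne' hB.ne'] at k2
    have m1 := mul_le_mul_of_nonneg_left k1 hα.le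
    have m2 := mul_le_mul_of_nonneg_left k2 hβ.le
    have key : α * ((t - μ) / ((s + t) * α / (α + β)) - 1)
        + β * ((s + μ) / ((s + t) * β / (α + β)) - 1) = 0 := by
      field_simp
      ring
    linarith
end
end

section
/- Let a, b be real numbers with a > 0 and b > 0, and let z, w ∈ ℝ. Then the supremum over μ ∈ ℝ of the function μ ↦ b·(e^{w} − e^{z+μ}) + a·(e^{z} − e^{w−μ}) equals ( √(a·e^{z}) − √(b·e^{w}) )², and it is attained at μ* = (1/2)·log( (a/b)·e^{w−z} ). -/
noncomputable section
open Real

theorem exp_transfer_optimization (a b z w : ℝ) (ha : 0 < a) (hb : 0 < b) :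
    (b * (Real.exp w - Real.exp (z + (1 / 2) * Real.log ((a / b) * Real.exp (w - z))))
        + a * (Real.exp z - Real.exp (w - (1 / 2) * Real.log ((a / b) * Real.exp (w - z)))))
      = (Real.sqrt (a * Real.exp z) - Real.sqrt (b * Real.exp w)) ^ 2
    ∧ ∀ μ : ℝ,
        b * (Real.exp w - Real.exp (z + μ)) + a * (Real.exp z - Real.exp (w - μ))
          ≤ (Real.sqrt (a * Real.exp z) - Real.sqrt (b * Real.exp w)) ^ 2 := by
  obtain ⟨α, rfl⟩ : ∃ α, Real.exp α = a := ⟨Real.log a, Real.exp_log ha⟩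
  obtain ⟨β, rfl⟩ : ∃ β, Real.exp β = b := ⟨Real.log b, Real.exp_log hb⟩
  have hlog : Real.log (Real.exp α / Real.exp β * Real.exp (w - z)) = α - β + (w - z) := by
    rw [← Real.exp_sub, ← Real.exp_add, Real.log_exp]
  have hs : ∀ x : ℝ, Real.sqrt (Real.exp x) = Real.exp (x / 2) := fun x => by
    rw [Real.exp_half]
  have hsq : ∀ x : ℝ, Real.exp x = Real.exp (x / 2) ^ 2 := fun x => by
    rw [sq, ← Real.exp_add]; congr 1; ring
  rw [hlog]
  simp only [mul_sub, ← Real.exp_add, hs]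
  have h1 := hsq (α + z)
  have h2 := hsq (β + w)
  constructor
  · have h3 : Real.exp (β + (z + 1 / 2 * (α - β + (w - z))))
        = Real.exp ((α + z) / 2) * Real.exp ((β + w) / 2) := by
      rw [← Real.exp_add]; congr 1; ring
    have h4 : Real.exp (α + (w - 1 / 2 * (α - β + (w - z))))
        = Real.exp ((α + z) / 2) * Real.exp ((β + w) / 2) := by
      rw [← Real.exp_add]; congr 1; ring
    simp only [mul_sub, mul_add] at h3 h4 ⊢
    rw [h3, h4, h1, h2]; ring
  · intro μ
    have h3 := hsq (β + (z + μ))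
    have h4 := hsq (α + (w - μ))
    have h5 : Real.exp ((β + (z + μ)) / 2) * Real.exp ((α + (w - μ)) / 2)
        = Real.exp ((α + z) / 2) * Real.exp ((β + w) / 2) := by
      rw [← Real.exp_add, ← Real.exp_add]; congr 1; ring
    rw [h1, h2, h3, h4]
    nlinarith [sq_nonneg (Real.exp ((β + (z + μ)) / 2) - Real.exp ((α + (w - μ)) / 2))]
end
end

section
/- Let α, β, s, t be real numbers with α > 0, β > 0, s > 0, t > 0. Then the supremum over μ ∈ (−s, t) of the function μ ↦ α·(1/s − 1/(t − μ)) + β·(1/t − 1/(s + μ)) equals α/s + β/t − (√α + √β)²/(s + t), and it is attained at μ* = (√β·t − √α·s)/(√α + √β). -/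
noncomputable section
open Real

theorem inverse_transfer_optimization (α β s t : ℝ)
    (hα : 0 < α) (hβ : 0 < β) (hs : 0 < s) (ht : 0 < t) :
    (Real.sqrt β * t - Real.sqrt α * s) / (Real.sqrt α + Real.sqrt β) ∈ Set.Ioo (-s) t
    ∧ (α * (1 / s - 1 / (t - (Real.sqrt β * t - Real.sqrt α * s) / (Real.sqrt α + Real.sqrt β)))
        + β * (1 / t - 1 / (s + (Real.sqrt β * t - Real.sqrt α * s) / (Real.sqrt α + Real.sqrt β))))
      = α / s + β / t - (Real.sqrt α + Real.sqrt β) ^ 2 / (s + t)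
    ∧ ∀ μ ∈ Set.Ioo (-s) t,
        α * (1 / s - 1 / (t - μ)) + β * (1 / t - 1 / (s + μ))
          ≤ α / s + β / t - (Real.sqrt α + Real.sqrt β) ^ 2 / (s + t) := by
  have ha : 0 < Real.sqrt α := Real.sqrt_pos.2 hα
  have hb : 0 < Real.sqrt β := Real.sqrt_pos.2 hβ
  have hα2 : Real.sqrt α ^ 2 = α := Real.sq_sqrt hα.le
  have hβ2 : Real.sqrt β ^ 2 = β := Real.sq_sqrt hβ.le
  generalize Real.sqrt α = a at *
  generalize Real.sqrt β = b at *
  subst hα2 hβ2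
  have hab : 0 < a + b := by positivity
  have hst : 0 < s + t := by positivity
  have e1 : t - (b * t - a * s) / (a + b) = a * (s + t) / (a + b) := by
    field_simp
    ring
  have e2 : s + (b * t - a * s) / (a + b) = b * (s + t) / (a + b) := by
    field_simp
    ring
  have p1 : 0 < a * (s + t) / (a + b) := by positivity
  have p2 : 0 < b * (s + t) / (a + b) := by positivity
  refine ⟨⟨by linarith, by linarith⟩, ?_, ?_⟩
  · rw [e1, e2]
    field_simp
    ring
  · rintro μ ⟨h1, h2⟩
    have hx : 0 < t - μ := by linarith
    have hy : 0 < s + μ := by linarith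
    have key : a ^ 2 / (t - μ) + b ^ 2 / (s + μ) - (a + b) ^ 2 / (s + t)
        = (a * (s + μ) - b * (t - μ)) ^ 2 / ((t - μ) * (s + μ) * (s + t)) := by
      field_simp
      ring
    have hk : 0 ≤ (a * (s + μ) - b * (t - μ)) ^ 2 / ((t - μ) * (s + μ) * (s + t)) := by
      positivity
    have e : a ^ 2 * (1 / s - 1 / (t - μ)) + b ^ 2 * (1 / t - 1 / (s + μ))
        = a ^ 2 / s + b ^ 2 / t - (a ^ 2 / (t - μ) + b ^ 2 / (s + μ)) := by
      ring
    rw [e]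
    linarith
end
end
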